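/- arXiv:1102.5380 — 3 statements merged into one kernel-verified Lean document; each statement's English description precedes it below -/
import Mathlib

section
/- Let (a^k)_k and (b^k)_k be two a.e. monotone sequences of vectors in ℝ^k satisfying max_{1≤j≤k}|a_j^k| = O(log k) and max_{1≤j≤k}|b_j^k| = O(log k) as k → ∞. If (a^k, b^k)_k is μ-distributed for some tight probability measure μ on ℝ², then for every bounded continuous function φ : ℝ → ℝ, lim_{k→∞} (1/k)·Trace[φ(J(a^k,b^k))] = (1/π) ∫_{ℝ²} ∫_0^π φ(x + 2y·cos t) dt dμ(x,y). -/
open Filter MeasureTheory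

noncomputable section

/-- The `k × k` Jacobi (real symmetric tridiagonal) matrix with diagonal entries
`a 0, …, a (k-1)` and sub/super-diagonal entries `b 0, …, b (k-2)` (0-indexed). -/
def jacobiMatrix (k : ℕ) (a b : ℕ → ℝ) : Matrix (Fin k) (Fin k) ℝ :=
  Matrix.of fun i j =>
    if (i : ℕ) = (j : ℕ) then a i
    else if (i : ℕ) + 1 = (j : ℕ) then b i
    else if (j : ℕ) + 1 = (i : ℕ) then b j
    else 0

theorem jacobiMatrix_isHermitian (k : ℕ) (a b : ℕ → ℝ) :
    (jacobiMatrix k a b).IsHermitian := by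
  show _ = _
  ext i j
  simp only [Matrix.conjTranspose_apply, jacobiMatrix, Matrix.of_apply, star_trivial]
  by_cases h1 : (i : ℕ) = (j : ℕ)
  · have h : i = j := Fin.ext h1
    subst h
    rfl
  · have h1' : ¬ (j : ℕ) = (i : ℕ) := fun h => h1 h.symm
    by_cases h2 : (i : ℕ) + 1 = (j : ℕ)
    · have h3 : ¬ (j : ℕ) + 1 = (i : ℕ) := by omega
      simp [h1, h1', h2, h3]
    · by_cases h3 : (j : ℕ) + 1 = (i : ℕ) <;> simp [h1, h1', h2, h3]

/-- `Trace[φ(J(a,b))] = ∑ⱼ φ(λⱼ)`, the sum of `φ` over the eigenvalues of the Jacobi matrix. -/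
def jacobiTrace (k : ℕ) (a b : ℕ → ℝ) (φ : ℝ → ℝ) : ℝ :=
  ∑ i, φ ((jacobiMatrix_isHermitian k a b).eigenvalues i)

/-- The class `𝒮`: small deviations `∑ᵢ |a_{i+1}^k − a_i^k| = o(k)` and entries in `[0,1]`. -/
def MemS (a : ℕ → ℕ → ℝ) : Prop :=
  ((fun k : ℕ => ∑ i ∈ Finset.range (k - 1), |a k (i + 1) - a k i|)
      =o[Filter.atTop] fun k : ℕ => (k : ℝ)) ∧
  ∀ k : ℕ, ∀ i < k, a k i ∈ Set.Icc (0 : ℝ) 1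

/-- The class `𝒮′`: for every `δ ∈ (0,1)`, `∑ᵢ |a_{i+1}^k − a_i^k| = O(k^{1−δ})`, and
`maxᵢ |a_i^k| = O(log k)`. -/
def MemS' (a : ℕ → ℕ → ℝ) : Prop :=
  (∀ δ : ℝ, δ ∈ Set.Ioo (0 : ℝ) 1 →
    ((fun k : ℕ => ∑ i ∈ Finset.range (k - 1), |a k (i + 1) - a k i|)
        =O[Filter.atTop] fun k : ℕ => (k : ℝ) ^ (1 - δ))) ∧
  ∃ C : ℝ, ∀ᶠ k : ℕ in Filter.atTop, ∀ i < k, |a k i| ≤ C * Real.log k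

/-- `μ`-distributed on `I² = [0,1]²`. -/
def MuDistributedI (a b : ℕ → ℕ → ℝ) (μ : Measure (ℝ × ℝ)) : Prop :=
  ∀ ψ : ℝ × ℝ → ℝ, ContinuousOn ψ (Set.Icc (0 : ℝ) 1 ×ˢ Set.Icc (0 : ℝ) 1) →
    Filter.Tendsto (fun k : ℕ => (1 / (k : ℝ)) * ∑ j ∈ Finset.range k, ψ (a k j, b k j))
      Filter.atTop (nhds (∫ p, ψ p ∂μ))

/-- `μ`-distributed on `ℝ²` (test functions: bounded continuous). -/
def MuDistributedR (a b : ℕ → ℕ → ℝ) (μ : Measure (ℝ × ℝ)) : Prop :=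
  ∀ ψ : ℝ × ℝ → ℝ, Continuous ψ → (∃ C : ℝ, ∀ p, |ψ p| ≤ C) →
    Filter.Tendsto (fun k : ℕ => (1 / (k : ℝ)) * ∑ j ∈ Finset.range k, ψ (a k j, b k j))
      Filter.atTop (nhds (∫ p, ψ p ∂μ))

/-- Tightness via closed bounded rectangles. -/
def TightRect (μ : Measure (ℝ × ℝ)) : Prop :=
  ∀ ε : ℝ, 0 < ε → ∃ x₁ x₂ y₁ y₂ : ℝ,
    μ ((Set.Icc x₁ x₂ ×ˢ Set.Icc y₁ y₂)ᶜ) < ENNReal.ofReal ε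

/-- Almost everywhere increasing sequence of vectors. -/
def AEIncreasing (a : ℕ → ℕ → ℝ) : Prop :=
  Filter.Tendsto
    (fun k : ℕ => (((Finset.range (k - 1)).filter fun i => a k i ≤ a k (i + 1)).card : ℝ) / k)
    Filter.atTop (nhds 1)

/-- Almost everywhere decreasing sequence of vectors. -/
def AEDecreasing (a : ℕ → ℕ → ℝ) : Prop :=
  Filter.Tendsto
    (fun k : ℕ => (((Finset.range (k - 1)).filter fun i => a k (i + 1) ≤ a k i).card : ℝ) / k)
    Filter.atTop (nhds 1)

/-- Almost everywhere monotone sequence of vectors. -/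
def AEMonotone (a : ℕ → ℕ → ℝ) : Prop :=
  AEIncreasing a ∨ AEDecreasing a


/-- Real coefficients of a complex vector in a real orthonormal system. -/
def hatv {n : Type*} [Fintype n] (U : Matrix n n ℝ) (w : n → ℂ) (m : n) : ℂ :=
  ∑ j, (U j m : ℂ) * w j

theorem hatv_polar {n : Type*} [Fintype n] [DecidableEq n] (U : Matrix n n ℝ)
    (hU : ∀ i j, ∑ m, U i m * U j m = if i = j then 1 else 0) (u w : n → ℂ) :
    ∑ m, (starRingEnd ℂ) (hatv U u m) * hatv U w m = ∑ j, (starRingEnd ℂ) (u j) * w j := by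
  have h1 : ∀ m, (starRingEnd ℂ) (hatv U u m) * hatv U w m
      = ∑ i, ∑ j, ((U i m * U j m : ℝ) : ℂ) * ((starRingEnd ℂ) (u i) * w j) := by
    intro m
    simp only [hatv, map_sum, map_mul, Complex.conj_ofReal, Finset.sum_mul_sum]
    refine Finset.sum_congr rfl fun i _ => Finset.sum_congr rfl fun j _ => ?_
    push_cast; ring
  simp only [h1]
  rw [Finset.sum_comm]
  refine Finset.sum_congr rfl fun i _ => ?_
  rw [Finset.sum_comm]
  have h2 : ∀ j, ∑ m, ((U i m * U j m : ℝ) : ℂ) * ((starRingEnd ℂ) (u i) * w j)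
      = if i = j then (starRingEnd ℂ) (u i) * w j else 0 := by
    intro j
    rw [← Finset.sum_mul, ← Complex.ofReal_sum, hU]
    split_ifs <;> simp
  rw [Finset.sum_congr rfl fun j _ => h2 j]
  simp

theorem hatv_parseval {n : Type*} [Fintype n] [DecidableEq n] (U : Matrix n n ℝ)
    (hU : ∀ i j, ∑ m, U i m * U j m = if i = j then 1 else 0) (w : n → ℂ) :
    ∑ m, ‖hatv U w m‖ ^ 2 = ∑ j, ‖w j‖ ^ 2 := by
  have h := hatv_polar U hU w w
  simp only [Complex.conj_mul'] at h
  exact_mod_cast h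

theorem hatv_sub {n : Type*} [Fintype n] (U : Matrix n n ℝ) (u w : n → ℂ) (m : n) :
    hatv U (fun j => u j - w j) m = hatv U u m - hatv U w m := by
  simp [hatv, mul_sub, Finset.sum_sub_distrib]

theorem hatv_eig {n : Type*} [Fintype n] (U A : Matrix n n ℝ) (lam : n → ℝ)
    (hUA : ∀ m j, ∑ i, U i m * A i j = lam m * U j m) (w : n → ℂ) (m : n) :
    hatv U (fun i => ∑ j, (A i j : ℂ) * w j) m = lam m * hatv U w m := by
  simp only [hatv, Finset.mul_sum]
  rw [Finset.sum_comm]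
  refine Finset.sum_congr rfl fun j _ => ?_
  have := hUA m j
  have h2 : ((∑ i, U i m * A i j : ℝ) : ℂ) = ((lam m * U j m : ℝ) : ℂ) := by rw [this]
  push_cast at h2
  rw [← mul_assoc, ← h2, Finset.sum_mul]
  exact Finset.sum_congr rfl fun i _ => by ring

theorem duhamel {n : Type*} [Fintype n] [DecidableEq n] (U A : Matrix n n ℝ) (lam : n → ℝ)
    (hU : ∀ i j, ∑ m, U i m * U j m = if i = j then 1 else 0)
    (hUA : ∀ m j, ∑ i, U i m * A i j = lam m * U j m)
    (S : n → ℝ) (w : n → ℂ) (s E : ℝ)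
    (hE : ∀ σ : ℝ, |σ| ≤ |s| →
      √(∑ i, ‖∑ j, (A i j : ℂ) * (w j * Complex.exp (σ * S j * Complex.I))
        - S i * (w i * Complex.exp (σ * S i * Complex.I))‖ ^ 2) ≤ E) :
    √(∑ m, ‖Complex.exp (s * lam m * Complex.I) * hatv U w m
      - hatv U (fun j => w j * Complex.exp (s * S j * Complex.I)) m‖ ^ 2) ≤ E * |s| := by
  set wt : ℝ → n → ℂ := fun σ j => w j * Complex.exp (σ * S j * Complex.I) with hwt
  set G : ℝ → EuclideanSpace ℂ n := fun σ =>
    WithLp.toLp 2 (fun m => Complex.exp (-(σ * lam m * Complex.I)) * hatv U (wt σ) m) with hG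
  set R : ℝ → n → ℂ := fun σ i => ∑ j, (A i j : ℂ) * wt σ j - S i * wt σ i with hR
  set G' : ℝ → EuclideanSpace ℂ n := fun σ =>
    WithLp.toLp 2 (fun m => -Complex.I * Complex.exp (-(σ * lam m * Complex.I)) *
      hatv U (R σ) m) with hG'
  have hnormexp : ∀ (x y : ℝ), ‖Complex.exp (x * y * Complex.I)‖ = 1 := by
    intro x y
    rw [← Complex.ofReal_mul, Complex.norm_exp_ofReal_mul_I]
  have hnormexp' : ∀ (x y : ℝ), ‖Complex.exp (-(x * y * Complex.I))‖ = 1 := by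
    intro x y
    have := Complex.norm_exp_ofReal_mul_I (-(x*y))
    rw [← this]; push_cast; ring_nf
  have hder : ∀ σ : ℝ, HasDerivAt G (G' σ) σ := by
    intro σ
    suffices hpi : HasDerivAt (fun σ m => G σ m) (fun m => G' σ m) σ by
      have := ((PiLp.continuousLinearEquiv 2 ℝ (fun _ : n => ℂ)).symm.hasFDerivAt
        (x := fun m => G σ m)).comp_hasDerivAt σ hpi
      exact this
    rw [hasDerivAt_pi]
    intro m
    have hw : ∀ j, HasDerivAt (fun σ : ℝ => wt σ j) (S j * Complex.I * wt σ j) σ := by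
      intro j
      have h0 : HasDerivAt (fun σ : ℝ => (σ : ℂ)) 1 σ := Complex.ofRealCLM.hasDerivAt
      have := (((h0.mul_const (S j : ℂ)).mul_const Complex.I).cexp).const_mul (w j)
      convert! this using 1
      simp [hwt]; ring
    have hh : HasDerivAt (fun σ : ℝ => hatv U (wt σ) m)
        (∑ j, (U j m : ℂ) * (S j * Complex.I * wt σ j)) σ := by
      unfold hatv
      exact HasDerivAt.fun_sum fun j _ => (hw j).const_mul _
    have he : HasDerivAt (fun σ : ℝ => Complex.exp (-(σ * lam m * Complex.I)))
        (-(lam m * Complex.I) * Complex.exp (-(σ * lam m * Complex.I))) σ := by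
      have h0 : HasDerivAt (fun σ : ℝ => (σ : ℂ)) 1 σ := Complex.ofRealCLM.hasDerivAt
      have := (((h0.mul_const (lam m : ℂ)).mul_const Complex.I).fun_neg).cexp
      convert! this using 1
      ring
    have hprod := he.mul hh
    have hval : -(lam m * Complex.I) * Complex.exp (-(σ * lam m * Complex.I)) * hatv U (wt σ) m
        + Complex.exp (-(σ * lam m * Complex.I)) * (∑ j, (U j m : ℂ) * (S j * Complex.I * wt σ j))
        = G' σ m := by
      have e1 : hatv U (R σ) m = lam m * hatv U (wt σ) m - ∑ j, (U j m : ℂ) * (S j * wt σ j) := by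
        rw [← hatv_eig U A lam hUA, hR]
        exact hatv_sub U _ _ m
      have e2 : (∑ j, (U j m : ℂ) * (S j * Complex.I * wt σ j))
          = Complex.I * ∑ j, (U j m : ℂ) * (S j * wt σ j) := by
        rw [Finset.mul_sum]; exact Finset.sum_congr rfl fun j _ => by ring
      simp only [hG']
      rw [e1, e2]; ring
    rw [hval] at hprod
    exact hprod
  have hbound : ∀ σ : ℝ, |σ| ≤ |s| → ‖G' σ‖ ≤ E := by
    intro σ hσ
    rw [EuclideanSpace.norm_eq]
    refine le_trans (le_of_eq ?_) (hE σ hσ)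
    congr 1
    rw [show (∑ i, ‖∑ j, (A i j : ℂ) * (w j * Complex.exp (σ * S j * Complex.I))
        - S i * (w i * Complex.exp (σ * S i * Complex.I))‖ ^ 2) = ∑ i, ‖R σ i‖ ^ 2 from rfl,
      ← hatv_parseval U hU (R σ)]
    refine Finset.sum_congr rfl fun m _ => ?_
    simp only [hG']
    rw [norm_mul, norm_mul, hnormexp']
    simp
  have hmv : ‖G s - G 0‖ ≤ E * ‖s - 0‖ := by
    refine Convex.norm_image_sub_le_of_norm_hasDerivWithin_le (s := Set.uIcc 0 s)
      (fun x _ => (hder x).hasDerivWithinAt) ?_ (convex_uIcc 0 s) Set.left_mem_uIcc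
      Set.right_mem_uIcc
    intro x hx
    apply hbound
    have := Set.abs_sub_left_of_mem_uIcc hx
    simpa using this
  rw [EuclideanSpace.norm_eq] at hmv
  simp only [sub_zero, Real.norm_eq_abs] at hmv
  refine le_trans (le_of_eq ?_) hmv
  congr 1
  refine Finset.sum_congr rfl fun m _ => ?_
  congr 1
  have : Complex.exp (s * lam m * Complex.I) * hatv U w m
      - hatv U (fun j => w j * Complex.exp (s * S j * Complex.I)) m
      = -Complex.exp (s * lam m * Complex.I) * ((G s - G 0) m) := by
    have hz : wt 0 = w := by ext j; simp [hwt]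
    have hexp : Complex.exp (s * lam m * Complex.I) * Complex.exp (-(s * lam m * Complex.I)) = 1 := by
      rw [← Complex.exp_add]; simp
    simp only [hG, PiLp.sub_apply, hz]
    simp only [Complex.ofReal_zero, zero_mul, neg_zero, Complex.exp_zero, one_mul]
    change _ - hatv U (wt s) m = _
    linear_combination (-hatv U (wt s) m) * (-hexp)
  rw [this, norm_mul, norm_neg, hnormexp, one_mul]

theorem sqrt_l2_triangle {n : Type*} [Fintype n] (f g : n → ℂ) :
    √(∑ i, ‖f i + g i‖ ^ 2) ≤ √(∑ i, ‖f i‖ ^ 2) + √(∑ i, ‖g i‖ ^ 2) := by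
  have := norm_add_le (WithLp.toLp 2 f : EuclideanSpace ℂ n) (WithLp.toLp 2 g)
  simpa [EuclideanSpace.norm_eq] using this

theorem l2_cauchy {n : Type*} [Fintype n] (f g : n → ℂ) :
    ‖∑ i, f i * g i‖ ≤ √(∑ i, ‖f i‖ ^ 2) * √(∑ i, ‖g i‖ ^ 2) := by
  refine (norm_sum_le _ _).trans ?_
  simp only [norm_mul]
  exact Real.sum_mul_le_sqrt_mul_sqrt _ _ _

theorem combine {n : Type*} [Fintype n] [DecidableEq n] (U A : Matrix n n ℝ) (lam : n → ℝ)
    (hU : ∀ i j, ∑ m, U i m * U j m = if i = j then 1 else 0)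
    (hUA : ∀ m j, ∑ i, U i m * A i j = lam m * U j m)
    (S : n → ℝ) (e : n → ℂ) (he : ∀ j, ‖e j‖ = 1) (χ : n → ℝ) (s E : ℝ)
    (hE : ∀ σ : ℝ, |σ| ≤ |s| →
      √(∑ i, ‖∑ j, (A i j : ℂ) * (χ j * e j * Complex.exp (σ * S j * Complex.I))
        - S i * (χ i * e i * Complex.exp (σ * S i * Complex.I))‖ ^ 2) ≤ E) :
    ‖∑ m, Complex.exp (s * lam m * Complex.I) * (‖hatv U e m‖ ^ 2 : ℝ)
      - ∑ j, χ j * Complex.exp (s * S j * Complex.I)‖ ≤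
      √(Fintype.card n) * (√(∑ j, (1 - χ j) ^ 2) + E * |s|) := by
  have hD := duhamel U A lam hU hUA S (fun j => χ j * e j) s E hE
  set f : n → ℂ := fun m => Complex.exp (s * lam m * Complex.I) * hatv U e m
      - Complex.exp (s * lam m * Complex.I) * hatv U (fun j => χ j * e j) m
  set g : n → ℂ := fun m => Complex.exp (s * lam m * Complex.I) * hatv U (fun j => χ j * e j) m
      - hatv U (fun j => χ j * e j * Complex.exp (s * S j * Complex.I)) m
  have hnormexp : ∀ (x y : ℝ), ‖Complex.exp (x * y * Complex.I)‖ = 1 := by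
    intro x y
    rw [← Complex.ofReal_mul, Complex.norm_exp_ofReal_mul_I]
  have heq : ∑ m, Complex.exp (s * lam m * Complex.I) * (‖hatv U e m‖ ^ 2 : ℝ)
      - ∑ j, χ j * Complex.exp (s * S j * Complex.I)
      = ∑ m, (starRingEnd ℂ) (hatv U e m) * (f m + g m) := by
    have h1 : ∑ j, χ j * Complex.exp (s * S j * Complex.I)
        = ∑ m, (starRingEnd ℂ) (hatv U e m) *
          hatv U (fun j => χ j * e j * Complex.exp (s * S j * Complex.I)) m := by
      rw [hatv_polar U hU]
      refine Finset.sum_congr rfl fun j _ => ?_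
      have : (starRingEnd ℂ) (e j) * e j = 1 := by rw [Complex.conj_mul', he]; simp
      linear_combination (-(χ j * Complex.exp (s * S j * Complex.I))) * this
    rw [h1, ← Finset.sum_sub_distrib]
    refine Finset.sum_congr rfl fun m _ => ?_
    have : (((‖hatv U e m‖ ^ 2 : ℝ)) : ℂ) = (starRingEnd ℂ) (hatv U e m) * hatv U e m := by
      rw [Complex.conj_mul']; push_cast; rfl
    rw [this]
    simp only [f, g]
    ring
  rw [heq]
  refine (l2_cauchy _ _).trans ?_
  have hf : √(∑ m, ‖f m‖ ^ 2) = √(∑ j, (1 - χ j) ^ 2) := by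
    congr 1
    have h1 : ∀ m, ‖f m‖ ^ 2 = ‖hatv U (fun j => e j - χ j * e j) m‖ ^ 2 := by
      intro m
      rw [hatv_sub]
      simp only [f]
      rw [← mul_sub, norm_mul, hnormexp, one_mul]
    simp only [h1]
    rw [hatv_parseval U hU]
    refine Finset.sum_congr rfl fun j _ => ?_
    have : e j - χ j * e j = ((1 - χ j : ℝ) : ℂ) * e j := by push_cast; ring
    rw [this, norm_mul, he, mul_one, Complex.norm_real, Real.norm_eq_abs, sq_abs]
  have hc : √(∑ m, ‖(starRingEnd ℂ) (hatv U e m)‖ ^ 2) = √(Fintype.card n) := by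
    congr 1
    simp only [RCLike.norm_conj]
    rw [hatv_parseval U hU]
    simp [he]
  rw [hc]
  refine mul_le_mul_of_nonneg_left ?_ (Real.sqrt_nonneg _)
  refine (sqrt_l2_triangle f g).trans ?_
  rw [hf]
  exact add_le_add le_rfl hD

theorem integral_cos_int (d : ℤ) :
    ∫ t in (-Real.pi)..Real.pi, Real.cos (d * t) = if d = 0 then 2 * Real.pi else 0 := by
  split_ifs with h
  · subst h; simp; ring
  · have hd : (d : ℝ) ≠ 0 := by exact_mod_cast h
    rw [intervalIntegral.integral_comp_mul_left (fun x => Real.cos x) hd, integral_cos]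
    simp [Real.sin_int_mul_pi]

theorem integral_hatv (k : ℕ) (U : Matrix (Fin k) (Fin k) ℝ) (m : Fin k)
    (h2 : ∑ j, U j m ^ 2 = 1) :
    ∫ t in (-Real.pi)..Real.pi,
      ‖hatv U (fun j : Fin k => Complex.exp ((j : ℕ) * t * Complex.I)) m‖ ^ 2 = 2 * Real.pi := by
  have hexp : ∀ t : ℝ, ‖hatv U (fun j : Fin k => Complex.exp ((j : ℕ) * t * Complex.I)) m‖ ^ 2
      = ∑ i : Fin k, ∑ j : Fin k, U i m * U j m * Real.cos ((((i : ℕ) : ℤ) - ((j : ℕ) : ℤ) : ℤ) * t) := by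
    intro t
    have hre : (hatv U (fun j : Fin k => Complex.exp ((j : ℕ) * t * Complex.I)) m).re
        = ∑ j : Fin k, U j m * Real.cos ((j : ℕ) * t) := by
      simp only [hatv, Complex.re_sum]
      refine Finset.sum_congr rfl fun j _ => ?_
      rw [Complex.re_ofReal_mul]
      congr 1
      have := Complex.exp_ofReal_mul_I_re ((j : ℕ) * t)
      push_cast at this; exact this
    have him : (hatv U (fun j : Fin k => Complex.exp ((j : ℕ) * t * Complex.I)) m).im
        = ∑ j : Fin k, U j m * Real.sin ((j : ℕ) * t) := by
      simp only [hatv, Complex.im_sum]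
      refine Finset.sum_congr rfl fun j _ => ?_
      rw [Complex.im_ofReal_mul]
      congr 1
      have := Complex.exp_ofReal_mul_I_im ((j : ℕ) * t)
      push_cast at this; exact this
    rw [Complex.sq_norm, Complex.normSq_apply, hre, him, Finset.sum_mul_sum, Finset.sum_mul_sum,
      ← Finset.sum_add_distrib]
    refine Finset.sum_congr rfl fun i _ => ?_
    rw [← Finset.sum_add_distrib]
    refine Finset.sum_congr rfl fun j _ => ?_
    push_cast
    rw [sub_mul, Real.cos_sub]; ring
  simp only [hexp]
  rw [intervalIntegral.integral_finsetSum
    (fun i _ => Continuous.intervalIntegrable (by fun_prop) _ _)]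
  have h3 : ∀ i : Fin k, ∫ t in (-Real.pi)..Real.pi, ∑ j : Fin k, U i m * U j m *
      Real.cos ((((i : ℕ) : ℤ) - ((j : ℕ) : ℤ) : ℤ) * t) = U i m ^ 2 * (2 * Real.pi) := by
    intro i
    rw [intervalIntegral.integral_finsetSum
      (fun i _ => Continuous.intervalIntegrable (by fun_prop) _ _)]
    have h4 : ∀ j : Fin k, ∫ t in (-Real.pi)..Real.pi, U i m * U j m *
        Real.cos ((((i : ℕ) : ℤ) - ((j : ℕ) : ℤ) : ℤ) * t)
        = if i = j then U i m ^ 2 * (2 * Real.pi) else 0 := by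
      intro j
      rw [intervalIntegral.integral_const_mul, integral_cos_int]
      by_cases hij : i = j
      · subst hij; simp; ring
      · have : ((i : ℕ) : ℤ) - ((j : ℕ) : ℤ) ≠ 0 := by
          intro h; apply hij; ext; omega
        rw [if_neg this, if_neg hij]; simp
    rw [Finset.sum_congr rfl fun j _ => h4 j]
    simp
  rw [Finset.sum_congr rfl fun i _ => h3 i, ← Finset.sum_mul, h2, one_mul]

/-- The averaged symbol exponential. -/
def PhiS (s : ℝ) (p : ℝ × ℝ) : ℂ :=
  (1 / (2 * Real.pi) : ℝ) * ∫ t in (-Real.pi)..Real.pi,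
    Complex.exp (s * (p.1 + 2 * p.2 * Real.cos t : ℝ) * Complex.I)

theorem jac_data (k : ℕ) (A : Matrix (Fin k) (Fin k) ℝ) (hA : A.IsHermitian) :
    ∃ U : Matrix (Fin k) (Fin k) ℝ,
      (∀ i j, ∑ m, U i m * U j m = if i = j then 1 else 0) ∧
      (∀ m j, ∑ i, U i m * A i j = hA.eigenvalues m * U j m) ∧
      (∀ m, ∑ j, U j m ^ 2 = 1) := by
  refine ⟨fun i m => hA.eigenvectorBasis m i, ?_, ?_, ?_⟩
  · intro i j
    have h := Unitary.coe_mul_star_self hA.eigenvectorUnitary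
    have h2 := congrFun (congrFun h i) j
    rw [Matrix.mul_apply, Matrix.one_apply] at h2
    rw [← h2]
    refine Finset.sum_congr rfl fun m _ => ?_
    simp [Matrix.star_apply, Matrix.IsHermitian.eigenvectorUnitary_apply]
  · intro m j
    have h := hA.mulVec_eigenvectorBasis m
    have h2 := congrFun h j
    simp only [Matrix.mulVec, dotProduct, Pi.smul_apply, smul_eq_mul] at h2
    rw [← h2]
    refine Finset.sum_congr rfl fun i _ => ?_
    have : A i j = A j i := by
      have := hA.apply i j
      simpa using this.symm
    rw [this, mul_comm]
  · intro m
    have h := hA.eigenvectorBasis.orthonormal.1 m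
    have h2 := EuclideanSpace.norm_sq_eq (hA.eigenvectorBasis m)
    rw [h] at h2
    simp only [Real.norm_eq_abs, sq_abs] at h2
    simpa using h2.symm

theorem jac_bound (k : ℕ) (a b : ℕ → ℝ) (A : Matrix (Fin k) (Fin k) ℝ) (hA : A.IsHermitian)
    (χ : ℕ → ℝ) (s E : ℝ)
    (hE : ∀ t σ : ℝ, |σ| ≤ |s| →
      √(∑ i : Fin k, ‖∑ j : Fin k, (A i j : ℂ) * (χ j * Complex.exp ((j : ℕ) * t * Complex.I) *
          Complex.exp (σ * (a j + 2 * b j * Real.cos t : ℝ) * Complex.I))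
        - (a i + 2 * b i * Real.cos t : ℝ) * (χ i * Complex.exp ((i : ℕ) * t * Complex.I) *
          Complex.exp (σ * (a i + 2 * b i * Real.cos t : ℝ) * Complex.I))‖ ^ 2) ≤ E) :
    ‖∑ m : Fin k, Complex.exp (s * hA.eigenvalues m * Complex.I)
      - ∑ j ∈ Finset.range k, χ j * PhiS s (a j, b j)‖ ≤
      √k * (√(∑ j ∈ Finset.range k, (1 - χ j) ^ 2) + E * |s|) := by
  obtain ⟨U, h1, h2, h3⟩ := jac_data k A hA
  set B := √k * (√(∑ j ∈ Finset.range k, (1 - χ j) ^ 2) + E * |s|)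
  set F : ℝ → ℂ := fun t => ∑ m, Complex.exp (s * hA.eigenvalues m * Complex.I) *
      (‖hatv U (fun j : Fin k => Complex.exp ((j : ℕ) * t * Complex.I)) m‖ ^ 2 : ℝ)
  set F2 : ℝ → ℂ := fun t =>
    ∑ j : Fin k, χ j * Complex.exp (s * (a j + 2 * b j * Real.cos t : ℝ) * Complex.I)
  have hF : ∀ t, ‖F t - F2 t‖ ≤ B := by
    intro t
    have := combine U A hA.eigenvalues h1 h2 (fun j : Fin k => a j + 2 * b j * Real.cos t)
      (fun j : Fin k => Complex.exp ((j : ℕ) * t * Complex.I))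
      (fun j => by
        have := Complex.norm_exp_ofReal_mul_I ((j : ℕ) * t)
        push_cast at this; exact this) (fun j : Fin k => χ j) s E (fun σ hσ => hE t σ hσ)
    rw [Fintype.card_fin] at this
    simp only [B]
    rw [← Fin.sum_univ_eq_sum_range (fun j => (1 - χ j) ^ 2) k]
    exact this
  have hcont : ∀ m, Continuous fun t : ℝ =>
      ‖hatv U (fun j : Fin k => Complex.exp ((j : ℕ) * t * Complex.I)) m‖ ^ 2 := by
    intro m; unfold hatv; fun_prop
  have hFc : Continuous F := by
    refine continuous_finsetSum _ fun m _ => ?_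
    have := hcont m
    exact continuous_const.mul (Complex.continuous_ofReal.comp this)
  have hF2c : Continuous F2 := by
    fun_prop
  have hFi : ∫ t in (-Real.pi)..Real.pi, F t = (2 * Real.pi : ℝ) *
      ∑ m : Fin k, Complex.exp (s * hA.eigenvalues m * Complex.I) := by
    simp only [F]
    rw [intervalIntegral.integral_finsetSum]
    · rw [Finset.mul_sum]
      refine Finset.sum_congr rfl fun m _ => ?_
      rw [intervalIntegral.integral_const_mul, intervalIntegral.integral_ofReal,
        integral_hatv k U m (h3 m)]
      ring
    · intro m _
      exact (continuous_const.mul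
        (Complex.continuous_ofReal.comp (hcont m))).intervalIntegrable _ _
  have hF2i : ∫ t in (-Real.pi)..Real.pi, F2 t = (2 * Real.pi : ℝ) *
      ∑ j ∈ Finset.range k, χ j * PhiS s (a j, b j) := by
    rw [← Fin.sum_univ_eq_sum_range (fun j => χ j * PhiS s (a j, b j)) k]
    simp only [F2]
    rw [intervalIntegral.integral_finsetSum
      (fun i _ => Continuous.intervalIntegrable (by fun_prop) _ _), Finset.mul_sum]
    refine Finset.sum_congr rfl fun j _ => ?_
    rw [intervalIntegral.integral_const_mul]
    simp only [PhiS]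
    have : (Real.pi : ℂ) ≠ 0 := by exact_mod_cast Real.pi_ne_zero
    generalize (∫ t in (-Real.pi)..Real.pi,
      Complex.exp (s * (a j + 2 * b j * Real.cos t : ℝ) * Complex.I)) = I
    push_cast
    field_simp
  have hint : ‖∫ t in (-Real.pi)..Real.pi, (F t - F2 t)‖ ≤ B * |Real.pi - (-Real.pi)| :=
    intervalIntegral.norm_integral_le_of_norm_le_const fun t _ => hF t
  rw [intervalIntegral.integral_sub (hFc.intervalIntegrable _ _) (hF2c.intervalIntegrable _ _),
    hFi, hF2i, ← mul_sub, norm_mul, Complex.norm_real] at hint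
  have hp := Real.pi_pos
  have e1 : ‖2 * Real.pi‖ = 2 * Real.pi := by rw [Real.norm_eq_abs, abs_of_pos]; positivity
  have e2 : |Real.pi - -Real.pi| = 2 * Real.pi := by
    rw [abs_of_pos] <;> linarith
  rw [e1, e2, mul_comm] at hint
  exact le_of_mul_le_mul_right hint (by positivity)

/-- Clamp to `[-M, M]`. -/
def clp (M x : ℝ) : ℝ := max (-M) (min M x)

/-- Lipschitz cutoff. -/
def eta (M x : ℝ) : ℝ := max 0 (min 1 (M - |x|))

theorem eta_nonneg (M x : ℝ) : 0 ≤ eta M x := le_max_left _ _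

theorem eta_le_one (M x : ℝ) : eta M x ≤ 1 := max_le zero_le_one (min_le_left _ _)

theorem eta_ne_zero {M x : ℝ} (h : eta M x ≠ 0) : |x| ≤ M := by
  by_contra hc
  apply h
  unfold eta
  rw [max_eq_left]
  exact (min_le_right _ _).trans (by linarith)

theorem clp_of_abs_le {M x : ℝ} (h : |x| ≤ M) : clp M x = x := by
  have := abs_le.1 h
  unfold clp
  rw [min_eq_right this.2, max_eq_right this.1]

theorem clp_abs_le {M : ℝ} (hM : 0 ≤ M) (x : ℝ) : |clp M x| ≤ M := by
  unfold clp
  rw [abs_le]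
  exact ⟨le_max_left _ _, max_le (by linarith) (min_le_left _ _)⟩

theorem eta_clp {M : ℝ} (hM : 0 ≤ M) (x : ℝ) : eta M (clp M x) = eta M x := by
  by_cases h : |x| ≤ M
  · rw [clp_of_abs_le h]
  · push Not at h
    have h1 : |clp M x| = M := by
      unfold clp
      rcases le_total 0 x with h0 | h0
      · rw [abs_of_nonneg h0] at h
        rw [min_eq_left h.le, max_eq_right (by linarith), abs_of_nonneg hM]
      · rw [abs_of_nonpos h0] at h
        rw [min_eq_right (by linarith), max_eq_left (by linarith), abs_neg, abs_of_nonneg hM]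
    unfold eta
    rw [h1, sub_self, max_eq_left (min_le_right _ _), max_eq_left]
    exact (min_le_right _ _).trans (by linarith)

theorem eta_lip (M x y : ℝ) : |eta M x - eta M y| ≤ |x - y| := by
  unfold eta
  have h1 := abs_max_sub_max_le_abs (min 1 (M - |x|)) (min 1 (M - |y|)) 0
  rw [max_comm _ (0:ℝ), max_comm _ (0:ℝ)] at h1
  refine h1.trans ?_
  have h2 : |min 1 (M - |x|) - min 1 (M - |y|)| ≤ |(M - |x|) - (M - |y|)| := by
    have := abs_min_sub_min_le_max 1 (M - |x|) 1 (M - |y|)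
    simpa using this
  refine h2.trans ?_
  rw [show (M - |x|) - (M - |y|) = |y| - |x| by ring, abs_sub_comm x y]
  exact abs_abs_sub_abs_le _ _

theorem eta_lip_clp {M : ℝ} (hM : 0 ≤ M) (x y : ℝ) :
    |eta M x - eta M y| ≤ |clp M x - clp M y| := by
  rw [← eta_clp hM x, ← eta_clp hM y]; exact eta_lip _ _ _

theorem clp_mono (M : ℝ) {x y : ℝ} (h : x ≤ y) : clp M x ≤ clp M y :=
  max_le_max le_rfl (min_le_min le_rfl h)

theorem clp_neg {M : ℝ} (hM : 0 ≤ M) (x : ℝ) : clp M (-x) = -clp M x := by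
  unfold clp
  rw [← min_neg_neg, ← max_neg_neg]
  rw [neg_neg, max_comm, max_min_distrib_right, min_comm]
  rw [max_eq_left (by linarith : -M ≤ M), max_comm, min_comm]

theorem jac_row (k : ℕ) (a b : ℕ → ℝ) (f : ℕ → ℂ) (i : Fin k) :
    ∑ j : Fin k, (jacobiMatrix k a b i j : ℂ) * f j
      = a i * f i + (if (i : ℕ) + 1 < k then (b i : ℂ) * f (i + 1) else 0)
        + (if 0 < (i : ℕ) then (b (i - 1) : ℂ) * f (i - 1) else 0) := by
  have h : ∀ j : Fin k, (jacobiMatrix k a b i j : ℂ) * f j =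
      (if (i : ℕ) = j then (a i : ℂ) * f i else 0)
      + (if (i : ℕ) + 1 = j then (b i : ℂ) * f (i + 1) else 0)
      + (if 0 < (i : ℕ) ∧ (i : ℕ) - 1 = j then (b (i - 1) : ℂ) * f (i - 1) else 0) := by
    intro j
    simp only [jacobiMatrix, Matrix.of_apply]
    by_cases h1 : (i : ℕ) = j
    · rw [if_pos h1, if_pos h1, if_neg (by omega), if_neg (by omega), h1]; simp
    · rw [if_neg h1, if_neg h1]
      by_cases h2 : (i : ℕ) + 1 = j
      · rw [if_pos h2, if_pos h2, if_neg (by omega), h2]; simp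
      · rw [if_neg h2, if_neg h2]
        by_cases h3 : (j : ℕ) + 1 = i
        · rw [if_pos h3, if_pos (by omega)]
          have : (i : ℕ) - 1 = j := by omega
          rw [this]; simp
        · rw [if_neg h3, if_neg (by omega)]; simp
  rw [Finset.sum_congr rfl fun j _ => h j, Finset.sum_add_distrib, Finset.sum_add_distrib]
  have key : ∀ (n : ℕ) (c : ℂ), (∑ j : Fin k, if n = (j : ℕ) then c else 0)
      = if n < k then c else 0 := by
    intro n c
    rw [Fin.sum_univ_eq_sum_range (fun j => if n = j then c else 0) k]
    simp [Finset.sum_ite_eq]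
  congr 1
  · congr 1
    · rw [key, if_pos i.2]
    · rw [key]
  · by_cases h0 : 0 < (i : ℕ)
    · simp only [h0, true_and, if_true]
      rw [key, if_pos (by omega)]
    · simp [h0]

/-- Variation of the clamped sequences. -/
def dlt (M : ℝ) (a b : ℕ → ℝ) (i : ℕ) : ℝ :=
  |clp M (a (i + 1)) - clp M (a i)| + |clp M (b (i + 1)) - clp M (b i)|

/-- The cutoff sequence. -/
def chi (M : ℝ) (a b : ℕ → ℝ) (j : ℕ) : ℝ := eta M (a j) * eta M (b j) * eta M (b (j - 1))

theorem chi_nonneg (M : ℝ) (a b : ℕ → ℝ) (j : ℕ) : 0 ≤ chi M a b j :=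
  mul_nonneg (mul_nonneg (eta_nonneg _ _) (eta_nonneg _ _)) (eta_nonneg _ _)

theorem chi_le_one (M : ℝ) (a b : ℕ → ℝ) (j : ℕ) : chi M a b j ≤ 1 :=
  mul_le_one₀ (mul_le_one₀ (eta_le_one _ _) (eta_nonneg _ _) (eta_le_one _ _))
    (eta_nonneg _ _) (eta_le_one _ _)

theorem dlt_nonneg (M : ℝ) (a b : ℕ → ℝ) (i : ℕ) : 0 ≤ dlt M a b i := by
  unfold dlt; positivity

theorem prod3_lip {x y z x' y' z' : ℝ} (hy' : |y'| ≤ 1)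
    (hx' : |x'| ≤ 1) (hy : |y| ≤ 1) (hz : |z| ≤ 1) :
    |x * y * z - x' * y' * z'| ≤ |x - x'| + |y - y'| + |z - z'| := by
  have : x * y * z - x' * y' * z' = (x - x') * (y * z) + (y - y') * (x' * z) + (z - z') * (x' * y') := by
    ring
  rw [this]
  have h1 : |(x - x') * (y * z)| ≤ |x - x'| := by
    rw [abs_mul, abs_mul]
    exact mul_le_of_le_one_right (abs_nonneg _) (mul_le_one₀ hy (abs_nonneg _) hz)
  have h2 : |(y - y') * (x' * z)| ≤ |y - y'| := by
    rw [abs_mul, abs_mul]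
    exact mul_le_of_le_one_right (abs_nonneg _) (mul_le_one₀ hx' (abs_nonneg _) hz)
  have h3 : |(z - z') * (x' * y')| ≤ |z - z'| := by
    rw [abs_mul, abs_mul]
    exact mul_le_of_le_one_right (abs_nonneg _) (mul_le_one₀ hx' (abs_nonneg _) hy')
  have h4 := abs_add_three ((x - x') * (y * z)) ((y - y') * (x' * z)) ((z - z') * (x' * y'))
  linarith

theorem chi_lip {M : ℝ} (hM : 0 ≤ M) (a b : ℕ → ℝ) (i : ℕ) :
    |chi M a b (i + 2) - chi M a b (i + 1)| ≤ dlt M a b (i + 1) + dlt M a b i := by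
  have he : ∀ x, |eta M x| ≤ 1 := fun x => by
    rw [abs_of_nonneg (eta_nonneg _ _)]; exact eta_le_one _ _
  have h := prod3_lip (x := eta M (a (i+2))) (z' := eta M (b i)) (he (b (i+1))) (he (a (i+1))) (he (b (i+2)))
    (he (b (i+1)))
  have h1 := eta_lip_clp hM (a (i+2)) (a (i+1))
  have h2 := eta_lip_clp hM (b (i+2)) (b (i+1))
  have h3 := eta_lip_clp hM (b (i+1)) (b i)
  unfold chi dlt
  have e1 : i + 2 - 1 = i + 1 := by omega
  have e2 : i + 1 - 1 = i := by omega
  rw [e1, e2]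
  have := abs_nonneg (clp M (a (i+1)) - clp M (a i))
  have e3 : i + 1 + 1 = i + 2 := rfl
  rw [e3]
  linarith

theorem chi_ne_zero {M : ℝ} {a b : ℕ → ℝ} {j : ℕ} (h : chi M a b j ≠ 0) :
    |a j| ≤ M ∧ |b j| ≤ M ∧ |b (j - 1)| ≤ M := by
  unfold chi at h
  have h1 := left_ne_zero_of_mul h
  exact ⟨eta_ne_zero (left_ne_zero_of_mul h1), eta_ne_zero (right_ne_zero_of_mul h1),
    eta_ne_zero (right_ne_zero_of_mul h)⟩

/-- The slowly varying amplitude. -/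
def amp (M : ℝ) (a b : ℕ → ℝ) (t σ : ℝ) (j : ℕ) : ℂ :=
  chi M a b j * Complex.exp (σ * (a j + 2 * b j * Real.cos t : ℝ) * Complex.I)

theorem amp_eq (M : ℝ) (a b : ℕ → ℝ) (t σ : ℝ) (j : ℕ) :
    amp M a b t σ j = chi M a b j *
      Complex.exp ((σ * (clp M (a j) + 2 * clp M (b j) * Real.cos t) : ℝ) * Complex.I) := by
  unfold amp
  by_cases h : chi M a b j = 0
  · simp [h]
  · obtain ⟨h1, h2, _⟩ := chi_ne_zero h
    rw [clp_of_abs_le h1, clp_of_abs_le h2]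
    push_cast; rfl

theorem amp_norm_le (M : ℝ) (a b : ℕ → ℝ) (t σ : ℝ) (j : ℕ) : ‖amp M a b t σ j‖ ≤ 1 := by
  rw [amp_eq, norm_mul, Complex.norm_exp_ofReal_mul_I, mul_one, Complex.norm_real,
    Real.norm_eq_abs, abs_of_nonneg (chi_nonneg _ _ _ _)]
  exact chi_le_one _ _ _ _

theorem exp_lip (x y : ℝ) :
    ‖Complex.exp (x * Complex.I) - Complex.exp (y * Complex.I)‖ ≤ |x - y| := by
  have h : Complex.exp (x * Complex.I) - Complex.exp (y * Complex.I)
      = Complex.exp (y * Complex.I) * (Complex.exp (Complex.I * (x - y : ℝ)) - 1) := by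
    rw [mul_sub, ← Complex.exp_add, mul_one]
    congr 2; push_cast; ring
  rw [h, norm_mul, Complex.norm_exp_ofReal_mul_I, one_mul]
  exact Real.norm_exp_I_mul_ofReal_sub_one_le

theorem amp_lip {M : ℝ} (hM : 0 ≤ M) (a b : ℕ → ℝ) (t σ s : ℝ) (hs : |σ| ≤ |s|) (i : ℕ) :
    ‖amp M a b t σ (i + 2) - amp M a b t σ (i + 1)‖
      ≤ (1 + 2 * |s|) * (dlt M a b (i + 1) + dlt M a b i) := by
  rw [amp_eq, amp_eq]
  set x := σ * (clp M (a (i+2)) + 2 * clp M (b (i+2)) * Real.cos t) with hx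
  set y := σ * (clp M (a (i+1)) + 2 * clp M (b (i+1)) * Real.cos t) with hy
  have h : (chi M a b (i+2) : ℂ) * Complex.exp (x * Complex.I)
      - chi M a b (i+1) * Complex.exp (y * Complex.I)
      = ((chi M a b (i+2) - chi M a b (i+1) : ℝ) : ℂ) * Complex.exp (x * Complex.I)
        + chi M a b (i+1) * (Complex.exp (x * Complex.I) - Complex.exp (y * Complex.I)) := by
    push_cast; ring
  rw [h]
  refine (norm_add_le _ _).trans ?_
  rw [norm_mul, norm_mul, Complex.norm_exp_ofReal_mul_I, mul_one, Complex.norm_real,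
    Complex.norm_real, Real.norm_eq_abs, Real.norm_eq_abs, abs_of_nonneg (chi_nonneg _ _ _ _)]
  have h1 := chi_lip hM a b i
  have h2 := exp_lip x y
  have h3 : |x - y| ≤ |s| * (2 * dlt M a b (i+1)) := by
    have : x - y = σ * ((clp M (a (i+2)) - clp M (a (i+1)))
        + 2 * (clp M (b (i+2)) - clp M (b (i+1))) * Real.cos t) := by rw [hx, hy]; ring
    rw [this, abs_mul]
    refine mul_le_mul hs ?_ (abs_nonneg _) (abs_nonneg _)
    refine (abs_add_le _ _).trans ?_
    rw [abs_mul, abs_mul]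
    have hc := Real.abs_cos_le_one t
    have e3 : i + 1 + 1 = i + 2 := rfl
    unfold dlt; rw [e3]
    have p1 := abs_nonneg (clp M (a (i+2)) - clp M (a (i+1)))
    have p2 := abs_nonneg (clp M (b (i+2)) - clp M (b (i+1)))
    have : |(2:ℝ)| = 2 := by norm_num
    rw [this]
    nlinarith
  have h4 : chi M a b (i+1) * ‖Complex.exp (x * Complex.I) - Complex.exp (y * Complex.I)‖
      ≤ |s| * (2 * dlt M a b (i+1)) :=
    (mul_le_of_le_one_left (norm_nonneg _) (chi_le_one _ _ _ _)).trans (h2.trans h3)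
  have p1 := dlt_nonneg M a b i
  have p2 := mul_nonneg (abs_nonneg s) p1
  nlinarith

theorem b_amp_self (M : ℝ) (a b : ℕ → ℝ) (t σ : ℝ) (j : ℕ) :
    (b j : ℂ) * amp M a b t σ j = (clp M (b j) : ℂ) * amp M a b t σ j := by
  by_cases h : chi M a b j = 0
  · simp [amp, h]
  · rw [clp_of_abs_le (chi_ne_zero h).2.1]

theorem b_amp_pred (M : ℝ) (a b : ℕ → ℝ) (t σ : ℝ) (j : ℕ) :
    (b j : ℂ) * amp M a b t σ (j + 1) = (clp M (b j) : ℂ) * amp M a b t σ (j + 1) := by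
  by_cases h : chi M a b (j + 1) = 0
  · simp [amp, h]
  · have := (chi_ne_zero h).2.2
    rw [show j + 1 - 1 = j by omega] at this
    rw [clp_of_abs_le this]

/-- Row residual, after removing the phase. -/
def resid (M : ℝ) (k : ℕ) (a b : ℕ → ℝ) (t σ : ℝ) (i : ℕ) : ℂ :=
  (if i + 1 < k then (b i : ℂ) * (Complex.exp (t * Complex.I) * amp M a b t σ (i + 1)) else 0)
  + (if 0 < i then (b (i - 1) : ℂ) * (Complex.exp (-t * Complex.I) * amp M a b t σ (i - 1)) else 0)
  - (b i : ℂ) * amp M a b t σ i * (Complex.exp (t * Complex.I) + Complex.exp (-t * Complex.I))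

theorem row_eq (M : ℝ) (k : ℕ) (a b : ℕ → ℝ) (t σ : ℝ) (i : Fin k) :
    ∑ j : Fin k, (jacobiMatrix k a b i j : ℂ) *
        (chi M a b j * Complex.exp ((j : ℕ) * t * Complex.I) *
          Complex.exp (σ * (a j + 2 * b j * Real.cos t : ℝ) * Complex.I))
      - (a i + 2 * b i * Real.cos t : ℝ) * (chi M a b i * Complex.exp ((i : ℕ) * t * Complex.I) *
          Complex.exp (σ * (a i + 2 * b i * Real.cos t : ℝ) * Complex.I))
      = Complex.exp ((i : ℕ) * t * Complex.I) * resid M k a b t σ i := by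
  have hf : ∀ j : ℕ, (chi M a b j : ℂ) * Complex.exp ((j : ℕ) * t * Complex.I) *
          Complex.exp (σ * (a j + 2 * b j * Real.cos t : ℝ) * Complex.I)
        = Complex.exp ((j : ℕ) * t * Complex.I) * amp M a b t σ j := by
    intro j; unfold amp; ring
  simp only [hf]
  rw [jac_row k a b (fun j => Complex.exp ((j : ℕ) * t * Complex.I) * amp M a b t σ j) i]
  unfold resid
  have hcos : ((a i + 2 * b i * Real.cos t : ℝ) : ℂ)
      = a i + b i * (Complex.exp (t * Complex.I) + Complex.exp (-t * Complex.I)) := by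
    push_cast
    rw [Complex.cos]; ring
  rw [hcos]
  have e1 : Complex.exp (((i : ℕ) + 1 : ℕ) * t * Complex.I)
      = Complex.exp ((i : ℕ) * t * Complex.I) * Complex.exp (t * Complex.I) := by
    rw [← Complex.exp_add]; congr 1; push_cast; ring
  have e2 : 0 < (i : ℕ) → Complex.exp (((i : ℕ) - 1 : ℕ) * t * Complex.I)
      = Complex.exp ((i : ℕ) * t * Complex.I) * Complex.exp (-t * Complex.I) := by
    intro h
    rw [← Complex.exp_add]; congr 1; rw [Nat.cast_sub h]; push_cast; ring
  rw [e1]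
  by_cases h0 : 0 < (i : ℕ)
  · rw [e2 h0]
    by_cases h1 : (i : ℕ) + 1 < k
    · simp only [h0, h1, if_true]; ring
    · simp only [h0, h1, if_true, if_false]; ring
  · by_cases h1 : (i : ℕ) + 1 < k
    · simp only [h0, h1, if_true, if_false]; ring
    · simp only [h0, h1, if_false]; ring

theorem nexp (t : ℝ) : ‖Complex.exp (t * Complex.I)‖ = 1 := Complex.norm_exp_ofReal_mul_I t

theorem nexp' (t : ℝ) : ‖Complex.exp (-t * Complex.I)‖ = 1 := by
  have := Complex.norm_exp_ofReal_mul_I (-t)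
  push_cast at this; exact this

theorem clp_amp_le {M : ℝ} (hM : 0 ≤ M) (a b : ℕ → ℝ) (t σ : ℝ) (i j : ℕ) :
    ‖(clp M (b i) : ℂ) * amp M a b t σ j‖ ≤ M := by
  rw [norm_mul, Complex.norm_real, Real.norm_eq_abs]
  calc _ ≤ M * 1 := mul_le_mul (clp_abs_le hM _) (amp_norm_le _ _ _ _ _ _) (norm_nonneg _) hM
    _ = M := mul_one M

theorem resid_crude {M : ℝ} (hM : 0 ≤ M) (k : ℕ) (a b : ℕ → ℝ) (t σ : ℝ) (i : ℕ) :
    ‖resid M k a b t σ i‖ ≤ 4 * M := by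
  unfold resid
  have h1 : ‖(if i + 1 < k then
      (b i : ℂ) * (Complex.exp (t * Complex.I) * amp M a b t σ (i + 1)) else 0)‖ ≤ M := by
    split_ifs
    · rw [mul_left_comm, b_amp_pred, norm_mul, nexp, one_mul]; exact clp_amp_le hM _ _ _ _ _ _
    · simpa using hM
  have h2 : ‖(if 0 < i then
      (b (i - 1) : ℂ) * (Complex.exp (-t * Complex.I) * amp M a b t σ (i - 1)) else 0)‖ ≤ M := by
    split_ifs
    · rw [mul_left_comm, b_amp_self, norm_mul, nexp', one_mul]; exact clp_amp_le hM _ _ _ _ _ _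
    · simpa using hM
  have h3 : ‖(b i : ℂ) * amp M a b t σ i *
      (Complex.exp (t * Complex.I) + Complex.exp (-t * Complex.I))‖ ≤ M * 2 := by
    rw [b_amp_self, norm_mul]
    refine mul_le_mul (clp_amp_le hM _ _ _ _ _ _) ?_ (norm_nonneg _) hM
    refine (norm_add_le _ _).trans ?_
    rw [nexp, nexp']; norm_num
  refine (norm_sub_le _ _).trans ?_
  have := norm_add_le (if i + 1 < k then
      (b i : ℂ) * (Complex.exp (t * Complex.I) * amp M a b t σ (i + 1)) else 0) (if 0 < i then
      (b (i - 1) : ℂ) * (Complex.exp (-t * Complex.I) * amp M a b t σ (i - 1)) else 0)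
  linarith

theorem resid_fine {M : ℝ} (hM : 1 ≤ M) (k : ℕ) (a b : ℕ → ℝ) (t σ s : ℝ) (hs : |σ| ≤ |s|)
    (i : ℕ) (hi : i + 3 < k) :
    ‖resid M k a b t σ (i + 2)‖ ≤
      3 * M * (1 + 2 * |s|) * (dlt M a b (i + 2) + dlt M a b (i + 1) + dlt M a b i) := by
  have hM0 : 0 ≤ M := by linarith
  have heq : resid M k a b t σ (i + 2) =
      Complex.exp (t * Complex.I) * ((clp M (b (i + 2)) : ℂ) *
        (amp M a b t σ (i + 3) - amp M a b t σ (i + 2)))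
      - Complex.exp (-t * Complex.I) * ((clp M (b (i + 1)) : ℂ) *
        (amp M a b t σ (i + 2) - amp M a b t σ (i + 1)))
      - Complex.exp (-t * Complex.I) * (((clp M (b (i + 2)) - clp M (b (i + 1)) : ℝ) : ℂ) *
        amp M a b t σ (i + 2)) := by
    unfold resid
    rw [if_pos (by omega), if_pos (by omega), show i + 2 - 1 = i + 1 by omega]
    have f1 := b_amp_pred M a b t σ (i + 2)
    have f2 := b_amp_self M a b t σ (i + 2)
    have f3 := b_amp_self M a b t σ (i + 1)
    rw [show i + 2 + 1 = i + 3 from rfl] at *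
    push_cast
    linear_combination Complex.exp (t * Complex.I) * f1 + Complex.exp (-t * Complex.I) * f3
      - (Complex.exp (t * Complex.I) + Complex.exp (-t * Complex.I)) * f2
  rw [heq]
  have hb := fun j => clp_abs_le hM0 (b j)
  have h1 := amp_lip hM0 a b t σ s hs (i + 1)
  have h2 := amp_lip hM0 a b t σ s hs i
  have e3 : i + 1 + 2 = i + 3 := rfl
  have e2 : i + 1 + 1 = i + 2 := rfl
  rw [e3, e2] at h1
  have n1 : ‖Complex.exp (t * Complex.I) * ((clp M (b (i + 2)) : ℂ) *
        (amp M a b t σ (i + 3) - amp M a b t σ (i + 2)))‖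
        ≤ M * ((1 + 2 * |s|) * (dlt M a b (i + 2) + dlt M a b (i + 1))) := by
    rw [norm_mul, nexp, one_mul, norm_mul, Complex.norm_real, Real.norm_eq_abs]
    exact mul_le_mul (hb _) h1 (norm_nonneg _) hM0
  have n2 : ‖Complex.exp (-t * Complex.I) * ((clp M (b (i + 1)) : ℂ) *
        (amp M a b t σ (i + 2) - amp M a b t σ (i + 1)))‖
        ≤ M * ((1 + 2 * |s|) * (dlt M a b (i + 1) + dlt M a b i)) := by
    rw [norm_mul, nexp', one_mul, norm_mul, Complex.norm_real, Real.norm_eq_abs]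
    exact mul_le_mul (hb _) h2 (norm_nonneg _) hM0
  have n3 : ‖Complex.exp (-t * Complex.I) * (((clp M (b (i + 2)) - clp M (b (i + 1)) : ℝ) : ℂ) *
        amp M a b t σ (i + 2))‖ ≤ dlt M a b (i + 1) := by
    rw [norm_mul, nexp', one_mul, norm_mul, Complex.norm_real, Real.norm_eq_abs]
    refine (mul_le_of_le_one_right (abs_nonneg _) (amp_norm_le _ _ _ _ _ _)).trans ?_
    unfold dlt
    exact le_add_of_nonneg_left (abs_nonneg _)
  refine (norm_sub_le _ _).trans ?_
  refine (add_le_add (norm_sub_le _ _) le_rfl).trans ?_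
  have p0 := dlt_nonneg M a b i
  have p1 := dlt_nonneg M a b (i+1)
  have p2 := dlt_nonneg M a b (i+2)
  have q : 1 ≤ M * (1 + 2 * |s|) := by nlinarith [abs_nonneg s]
  set Q := M * (1 + 2 * |s|) with hQ
  have n3' : dlt M a b (i+1) ≤ Q * dlt M a b (i+1) := le_mul_of_one_le_left p1 q
  have z0 := mul_nonneg (by linarith : 0 ≤ Q) p0
  have z2 := mul_nonneg (by linarith : 0 ≤ Q) p2
  have r1 : 3 * M * (1 + 2 * |s|) * (dlt M a b (i + 2) + dlt M a b (i + 1) + dlt M a b i)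
     = 3 * (Q * dlt M a b (i + 2)) + 3 * (Q * dlt M a b (i + 1)) + 3 * (Q * dlt M a b i) := by
    rw [hQ]; ring
  have r2 : M * ((1 + 2 * |s|) * (dlt M a b (i + 2) + dlt M a b (i + 1)))
     = Q * dlt M a b (i + 2) + Q * dlt M a b (i + 1) := by rw [hQ]; ring
  have r3 : M * ((1 + 2 * |s|) * (dlt M a b (i + 1) + dlt M a b i))
     = Q * dlt M a b (i + 1) + Q * dlt M a b i := by rw [hQ]; ring
  linarith

theorem resid_sum {M : ℝ} (hM : 1 ≤ M) (n : ℕ) (a b : ℕ → ℝ) (t σ s : ℝ) (hs : |σ| ≤ |s|) :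
    ∑ i ∈ Finset.range (n + 3), ‖resid M (n + 3) a b t σ i‖ ^ 2 ≤
      48 * M ^ 2 + 36 * M ^ 2 * (1 + 2 * |s|) * ∑ i ∈ Finset.range (n + 2), dlt M a b i := by
  have hM0 : 0 ≤ M := by linarith
  set C := 12 * M ^ 2 * (1 + 2 * |s|) with hC
  have hC0 : 0 ≤ C := by positivity
  have hc : ∀ i, ‖resid M (n + 3) a b t σ i‖ ^ 2 ≤ 16 * M ^ 2 := by
    intro i
    have := resid_crude hM0 (n + 3) a b t σ i
    have h0 := norm_nonneg (resid M (n + 3) a b t σ i)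
    nlinarith
  have hf : ∀ i ∈ Finset.range n, ‖resid M (n + 3) a b t σ (i + 2)‖ ^ 2
      ≤ C * (dlt M a b (i + 2) + dlt M a b (i + 1) + dlt M a b i) := by
    intro i hi
    have h1 := resid_crude hM0 (n + 3) a b t σ (i + 2)
    have h2 := resid_fine hM (n + 3) a b t σ s hs i (by have := Finset.mem_range.1 hi; omega)
    have h0 := norm_nonneg (resid M (n + 3) a b t σ (i + 2))
    rw [sq]
    calc _ ≤ (4 * M) * (3 * M * (1 + 2 * |s|) *
          (dlt M a b (i + 2) + dlt M a b (i + 1) + dlt M a b i)) :=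
          mul_le_mul h1 h2 h0 (by linarith)
      _ = _ := by rw [hC]; ring
  set T := ∑ i ∈ Finset.range (n + 2), dlt M a b i with hT
  have hd := dlt_nonneg M a b
  have t0 : ∑ i ∈ Finset.range n, dlt M a b i ≤ T :=
    Finset.sum_le_sum_of_subset_of_nonneg (Finset.range_subset_range.2 (by omega))
      fun i _ _ => hd i
  have t2 : ∑ i ∈ Finset.range n, dlt M a b (i + 2) ≤ T := by
    rw [hT, Finset.sum_range_succ', Finset.sum_range_succ']
    have := hd 0; have := hd 1
    simp only [zero_add]
    linarith
  have t1 : ∑ i ∈ Finset.range n, dlt M a b (i + 1) ≤ T := by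
    rw [hT, Finset.sum_range_succ', Finset.sum_range_succ]
    have := hd 0; have := hd (n+1)
    linarith
  have hs := Finset.sum_le_sum hf
  rw [← Finset.mul_sum, Finset.sum_add_distrib, Finset.sum_add_distrib] at hs
  rw [Finset.sum_range_succ, Finset.sum_range_succ', Finset.sum_range_succ']
  have c0 := hc 0
  have c1 := hc (0 + 1)
  have c2 := hc (n + 2)
  have : C * (∑ i ∈ Finset.range n, dlt M a b (i + 2) + ∑ i ∈ Finset.range n, dlt M a b (i + 1)
      + ∑ i ∈ Finset.range n, dlt M a b i) ≤ C * (3 * T) :=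
    mul_le_mul_of_nonneg_left (by linarith) hC0
  have e : 36 * M ^ 2 * (1 + 2 * |s|) * T = C * (3 * T) := by rw [hC]; ring
  rw [e]
  have e4 : ∀ i, i + 1 + 1 = i + 2 := fun i => rfl
  simp only [e4]
  linarith

theorem finite_bound {M : ℝ} (hM : 1 ≤ M) (k : ℕ) (hk : 3 ≤ k) (a b : ℕ → ℝ) (s : ℝ) :
    ‖∑ m : Fin k, Complex.exp (s * (jacobiMatrix_isHermitian k a b).eigenvalues m * Complex.I)
      - ∑ j ∈ Finset.range k, chi M a b j * PhiS s (a j, b j)‖ ≤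
      √k * (√(∑ j ∈ Finset.range k, (1 - chi M a b j) ^ 2) +
        √(48 * M ^ 2 + 36 * M ^ 2 * (1 + 2 * |s|) *
          ∑ i ∈ Finset.range (k - 1), dlt M a b i) * |s|) := by
  refine jac_bound k a b _ _ (chi M a b) s _ fun t σ hσ => ?_
  apply Real.sqrt_le_sqrt
  obtain ⟨n, rfl⟩ : ∃ n, k = n + 3 := ⟨k - 3, by omega⟩
  refine le_trans (le_of_eq ?_) (resid_sum hM n a b t σ s hσ)
  rw [← Fin.sum_univ_eq_sum_range (fun i => ‖resid M (n + 3) a b t σ i‖ ^ 2) (n + 3)]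
  refine Finset.sum_congr rfl fun i _ => ?_
  rw [row_eq, norm_mul]
  have := Complex.norm_exp_ofReal_mul_I ((i : ℕ) * t)
  push_cast at this
  rw [this, one_mul]

theorem tv_inc {M : ℝ} (hM : 0 ≤ M) (a : ℕ → ℕ → ℝ) (h : AEIncreasing a) :
    Tendsto (fun k : ℕ => (∑ i ∈ Finset.range (k - 1), |clp M (a k (i + 1)) - clp M (a k i)|) / k)
      atTop (nhds 0) := by
  unfold AEIncreasing at h
  have hlim : Tendsto (fun k : ℕ => 2 * M / (k : ℝ) + 4 * M * (1 -
      (((Finset.range (k - 1)).filter fun i => a k i ≤ a k (i + 1)).card : ℝ) / k))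
      atTop (nhds 0) := by
    have h1 := (tendsto_const_div_atTop_nhds_zero_nat (2 * M)).add
      ((h.const_sub 1).const_mul (4 * M))
    simpa using h1
  refine squeeze_zero' (Eventually.of_forall fun k => by positivity) ?_ hlim
  filter_upwards [eventually_ge_atTop 1] with k hk
  have hk0 : (0 : ℝ) < k := by exact_mod_cast hk
  set P := (Finset.range (k - 1)).filter fun i => a k i ≤ a k (i + 1) with hP
  have hterm : ∀ i ∈ Finset.range (k - 1), |clp M (a k (i + 1)) - clp M (a k i)| ≤
      (clp M (a k (i + 1)) - clp M (a k i)) +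
        4 * M * (1 - if a k i ≤ a k (i + 1) then (1 : ℝ) else 0) := by
    intro i _
    split_ifs with hi
    · rw [abs_of_nonneg (sub_nonneg.2 (clp_mono M hi))]; simp
    · have h1 := abs_le.1 (clp_abs_le hM (a k (i + 1)))
      have h2 := abs_le.1 (clp_abs_le hM (a k i))
      rw [abs_le]; constructor <;> linarith [h1.1, h1.2, h2.1, h2.2]
  have hsum := Finset.sum_le_sum hterm
  rw [Finset.sum_add_distrib, Finset.sum_range_sub (fun i => clp M (a k i)), ← Finset.mul_sum,
    Finset.sum_sub_distrib, Finset.sum_boole] at hsum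
  simp only [Finset.sum_const, Finset.card_range, nsmul_eq_mul, mul_one] at hsum
  have h1 := abs_le.1 (clp_abs_le hM (a k (k - 1)))
  have h2 := abs_le.1 (clp_abs_le hM (a k 0))
  have hk1 : ((k - 1 : ℕ) : ℝ) ≤ k := by exact_mod_cast Nat.sub_le k 1
  have : (∑ i ∈ Finset.range (k - 1), |clp M (a k (i + 1)) - clp M (a k i)|)
      ≤ 2 * M + 4 * M * (k - (P.card : ℝ)) := by
    refine hsum.trans ?_
    have : 4 * M * (((k - 1 : ℕ) : ℝ) - (P.card : ℝ)) ≤ 4 * M * (k - (P.card : ℝ)) :=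
      mul_le_mul_of_nonneg_left (by linarith) (by linarith)
    linarith [h1.1, h1.2, h2.1, h2.2]
  calc _ ≤ (2 * M + 4 * M * (k - (P.card : ℝ))) / k := div_le_div_of_nonneg_right this hk0.le
    _ = _ := by field_simp

theorem tv_mono {M : ℝ} (hM : 0 ≤ M) (a : ℕ → ℕ → ℝ) (h : AEMonotone a) :
    Tendsto (fun k : ℕ => (∑ i ∈ Finset.range (k - 1), |clp M (a k (i + 1)) - clp M (a k i)|) / k)
      atTop (nhds 0) := by
  rcases h with h | h
  · exact tv_inc hM a h
  · have h2 : AEIncreasing (fun k i => -a k i) := by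
      unfold AEIncreasing
      unfold AEDecreasing at h
      simpa using h
    have := tv_inc hM _ h2
    refine this.congr fun k => ?_
    congr 1
    refine Finset.sum_congr rfl fun i _ => ?_
    rw [clp_neg hM, clp_neg hM, ← abs_neg]
    congr 1; ring

theorem muC {a b : ℕ → ℕ → ℝ} {μ : Measure (ℝ × ℝ)} [IsProbabilityMeasure μ]
    (hμ : MuDistributedR a b μ) (ψ : ℝ × ℝ → ℂ) (hc : Continuous ψ) (C : ℝ)
    (hC : ∀ p, ‖ψ p‖ ≤ C) :
    Tendsto (fun k : ℕ => (1 / (k : ℝ) : ℂ) * ∑ j ∈ Finset.range k, ψ (a k j, b k j))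
      atTop (nhds (∫ p, ψ p ∂μ)) := by
  have hre := hμ (fun p => (ψ p).re) (by fun_prop)
    ⟨C, fun p => (Complex.abs_re_le_norm _).trans (hC p)⟩
  have him := hμ (fun p => (ψ p).im) (by fun_prop)
    ⟨C, fun p => (Complex.abs_im_le_norm _).trans (hC p)⟩
  have hint : Integrable ψ μ := Integrable.of_bound hc.aestronglyMeasurable C
    (Eventually.of_forall hC)
  have h1 := ((Complex.continuous_ofReal.tendsto _).comp hre).add
    (((Complex.continuous_ofReal.tendsto _).comp him).mul_const Complex.I)
  have e := integral_re_add_im hint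
  simp only [RCLike.re_to_complex, RCLike.im_to_complex, RCLike.I_to_complex] at e
  have e' : ((∫ p, (ψ p).re ∂μ : ℝ) : ℂ) + ((∫ p, (ψ p).im ∂μ : ℝ) : ℂ) * Complex.I
      = ∫ p, ψ p ∂μ := e
  rw [e'] at h1
  refine h1.congr fun k => ?_
  simp only [Function.comp]
  push_cast
  rw [mul_assoc, ← mul_add, Finset.sum_mul, ← Finset.sum_add_distrib]
  congr 1
  exact Finset.sum_congr rfl fun j _ => Complex.re_add_im _

theorem PhiS_continuous (s : ℝ) : Continuous (PhiS s) := by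
  unfold PhiS
  refine continuous_const.mul ?_
  apply intervalIntegral.continuous_parametric_intervalIntegral_of_continuous'
  fun_prop

theorem PhiS_norm_le (s : ℝ) (p : ℝ × ℝ) : ‖PhiS s p‖ ≤ 1 := by
  unfold PhiS
  rw [norm_mul, Complex.norm_real]
  have hp := Real.pi_pos
  have h : ‖∫ t in (-Real.pi)..Real.pi,
    Complex.exp (s * (p.1 + 2 * p.2 * Real.cos t : ℝ) * Complex.I)‖
      ≤ 1 * |Real.pi - (-Real.pi)| := by
    refine intervalIntegral.norm_integral_le_of_norm_le_const fun t _ => ?_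
    rw [← Complex.ofReal_mul, Complex.norm_exp_ofReal_mul_I]
  have e2 : |Real.pi - -Real.pi| = 2 * Real.pi := by
    rw [abs_of_pos] <;> linarith
  rw [e2, one_mul] at h
  have e1 : ‖1 / (2 * Real.pi)‖ = 1 / (2 * Real.pi) := by
    rw [Real.norm_eq_abs, abs_of_pos]; positivity
  rw [e1]
  calc _ ≤ 1 / (2 * Real.pi) * (2 * Real.pi) := mul_le_mul_of_nonneg_left h (by positivity)
    _ = 1 := by field_simp

/-- Mass outside the cutoff. -/
def rho (M : ℝ) (p : ℝ × ℝ) : ℝ := (1 - eta M p.1) + 2 * (1 - eta M p.2)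

theorem rho_nonneg (M : ℝ) (p : ℝ × ℝ) : 0 ≤ rho M p := by
  unfold rho; linarith [eta_le_one M p.1, eta_le_one M p.2]

theorem rho_le (M : ℝ) (p : ℝ × ℝ) : rho M p ≤ 3 := by
  unfold rho; linarith [eta_nonneg M p.1, eta_nonneg M p.2]

theorem rho_continuous (M : ℝ) : Continuous (rho M) := by
  unfold rho eta; fun_prop

theorem rho_tendsto (μ : Measure (ℝ × ℝ)) [IsProbabilityMeasure μ] :
    Tendsto (fun n : ℕ => ∫ p, rho n p ∂μ) atTop (nhds 0) := by
  have h := tendsto_integral_of_dominated_convergence (μ := μ) (F := fun (n : ℕ) p => rho n p)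
    (f := fun _ => 0) (fun _ => 3) (fun n => (rho_continuous n).aestronglyMeasurable)
    (integrable_const _)
    (fun n => Eventually.of_forall fun p => by
      rw [Real.norm_eq_abs, abs_of_nonneg (rho_nonneg _ _)]; exact rho_le _ _)
    (Eventually.of_forall fun p => by
      refine tendsto_const_nhds.congr' ?_
      have h1 := tendsto_natCast_atTop_atTop (R := ℝ) |>.eventually_ge_atTop (|p.1| + 1)
      have h2 := tendsto_natCast_atTop_atTop (R := ℝ) |>.eventually_ge_atTop (|p.2| + 1)
      filter_upwards [h1, h2] with n h1 h2
      have e1 : eta n p.1 = 1 := by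
        unfold eta; rw [min_eq_left (by linarith), max_eq_right zero_le_one]
      have e2 : eta n p.2 = 1 := by
        unfold eta; rw [min_eq_left (by linarith), max_eq_right zero_le_one]
      simp [rho, e1, e2])
  simpa using h

theorem chi_sum_le (M : ℝ) (a b : ℕ → ℝ) (k : ℕ) :
    ∑ j ∈ Finset.range k, (1 - chi M a b j) ≤ ∑ j ∈ Finset.range k, rho M (a j, b j) + 1 := by
  have h1 : ∀ j ∈ Finset.range k, 1 - chi M a b j ≤
      (1 - eta M (a j)) + (1 - eta M (b j)) + (1 - eta M (b (j - 1))) := by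
    intro j _
    unfold chi
    have x0 := eta_nonneg M (a j)
    have x1 := eta_le_one M (a j)
    have y0 := eta_nonneg M (b j)
    have y1 := eta_le_one M (b j)
    have z0 := eta_nonneg M (b (j-1))
    have z1 := eta_le_one M (b (j-1))
    generalize eta M (a j) = x at *
    generalize eta M (b j) = y at *
    generalize eta M (b (j-1)) = z at *
    have xy : 1 - x * y ≤ (1 - x) + (1 - y) := by nlinarith
    have xy0 := mul_nonneg x0 y0
    have xy1 : x * y ≤ 1 := mul_le_one₀ x1 y0 y1
    nlinarith
  refine (Finset.sum_le_sum h1).trans ?_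
  have h2 : ∑ j ∈ Finset.range k, (1 - eta M (b (j - 1))) ≤
      ∑ j ∈ Finset.range k, (1 - eta M (b j)) + 1 := by
    rcases k with _ | n
    · simp
    · rw [Finset.sum_range_succ', Finset.sum_range_succ]
      simp only [Nat.add_sub_cancel]
      linarith [eta_nonneg M (b (0 - 1)), eta_le_one M (b n)]
  simp only [rho, Finset.sum_add_distrib, ← Finset.mul_sum]
  linarith

theorem char_bound {M : ℝ} (hM : 1 ≤ M) (k : ℕ) (hk : 3 ≤ k) (a b : ℕ → ℝ) (s : ℝ) :
    ‖(1 / (k : ℝ) : ℂ) * ∑ m : Fin k,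
        Complex.exp (s * (jacobiMatrix_isHermitian k a b).eigenvalues m * Complex.I)
      - (1 / (k : ℝ) : ℂ) * ∑ j ∈ Finset.range k, PhiS s (a j, b j)‖ ≤
      √((1 / (k : ℝ)) * ∑ j ∈ Finset.range k, rho M (a j, b j) + 1 / k)
      + √(48 * M ^ 2 / k + 36 * M ^ 2 * (1 + 2 * |s|) *
          ((∑ i ∈ Finset.range (k - 1), dlt M a b i) / k)) * |s|
      + ((1 / (k : ℝ)) * ∑ j ∈ Finset.range k, rho M (a j, b j) + 1 / k) := by
  have hk0 : (0 : ℝ) < k := by exact_mod_cast (by omega : 0 < k)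
  have hfb := finite_bound hM k hk a b s
  set X := ∑ m : Fin k,
        Complex.exp (s * (jacobiMatrix_isHermitian k a b).eigenvalues m * Complex.I)
  set T := ∑ i ∈ Finset.range (k - 1), dlt M a b i
  set W := ∑ j ∈ Finset.range k, rho M (a j, b j)
  have hq := chi_sum_le M a b k
  have hd : ‖∑ j ∈ Finset.range k, (chi M a b j : ℂ) * PhiS s (a j, b j)
      - ∑ j ∈ Finset.range k, PhiS s (a j, b j)‖ ≤ W + 1 := by
    refine le_trans ?_ hq
    rw [← Finset.sum_sub_distrib]
    refine norm_sum_le_of_le _ fun j _ => ?_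
    have : (chi M a b j : ℂ) * PhiS s (a j, b j) - PhiS s (a j, b j)
        = -(((1 - chi M a b j : ℝ) : ℂ) * PhiS s (a j, b j)) := by push_cast; ring
    rw [this, norm_neg, norm_mul, Complex.norm_real, Real.norm_eq_abs,
      abs_of_nonneg (by linarith [chi_le_one M a b j])]
    exact mul_le_of_le_one_right (by linarith [chi_le_one M a b j]) (PhiS_norm_le _ _)
  have hsq : ∑ j ∈ Finset.range k, (1 - chi M a b j) ^ 2 ≤ W + 1 := by
    refine le_trans (Finset.sum_le_sum fun j _ => ?_) hq
    have := chi_le_one M a b j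
    have := chi_nonneg M a b j
    nlinarith
  have h1 : ‖X - ∑ j ∈ Finset.range k, PhiS s (a j, b j)‖ ≤
      √k * (√(W + 1) + √(48 * M ^ 2 + 36 * M ^ 2 * (1 + 2 * |s|) * T) * |s|) + (W + 1) := by
    refine (norm_sub_le_norm_sub_add_norm_sub _
      (∑ j ∈ Finset.range k, (chi M a b j : ℂ) * PhiS s (a j, b j)) _).trans ?_
    refine add_le_add (hfb.trans ?_) hd
    refine mul_le_mul_of_nonneg_left ?_ (Real.sqrt_nonneg _)
    exact add_le_add (Real.sqrt_le_sqrt hsq) le_rfl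
  have hn : ‖(1 / (k : ℝ) : ℂ)‖ = 1 / (k : ℝ) := by
    rw [norm_div, Complex.norm_real]; simp
  rw [← mul_sub, norm_mul, hn]
  have key : ∀ y : ℝ, 1 / (k : ℝ) * (√k * √y) = √(y / k) := by
    intro y
    rw [Real.sqrt_div' _ hk0.le]
    have h0 : √(k:ℝ) ≠ 0 := (Real.sqrt_pos.2 hk0).ne'
    have h2 : (k:ℝ) = √k * √k := (Real.mul_self_sqrt hk0.le).symm
    rw [show 1 / (k:ℝ) = 1 / (√k * √k) by rw [← h2]]
    field_simp
  calc _ ≤ 1 / (k : ℝ) * (√k * (√(W + 1) +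
          √(48 * M ^ 2 + 36 * M ^ 2 * (1 + 2 * |s|) * T) * |s|) + (W + 1)) :=
        mul_le_mul_of_nonneg_left h1 (by positivity)
    _ = 1 / (k : ℝ) * (√k * √(W + 1)) + (1 / (k : ℝ) *
          (√k * √(48 * M ^ 2 + 36 * M ^ 2 * (1 + 2 * |s|) * T))) * |s|
          + (1 / (k : ℝ) * W + 1 / k) := by ring
    _ = _ := by
      rw [key, key]
      congr 3
      · congr 1; ring
      · congr 1; ring

theorem char_tendsto (a b : ℕ → ℕ → ℝ) (hma : AEMonotone a) (hmb : AEMonotone b)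
    (μ : Measure (ℝ × ℝ)) [IsProbabilityMeasure μ] (hμ : MuDistributedR a b μ) (s : ℝ) :
    Tendsto (fun k : ℕ => (1 / (k : ℝ) : ℂ) * ∑ m : Fin k,
        Complex.exp (s * (jacobiMatrix_isHermitian k (a k) (b k)).eigenvalues m * Complex.I))
      atTop (nhds (∫ p, PhiS s p ∂μ)) := by
  have hPhi := muC hμ (PhiS s) (PhiS_continuous s) 1 (PhiS_norm_le s)
  suffices hdiff : Tendsto (fun k : ℕ => (1 / (k : ℝ) : ℂ) * ∑ m : Fin k,
        Complex.exp (s * (jacobiMatrix_isHermitian k (a k) (b k)).eigenvalues m * Complex.I)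
      - (1 / (k : ℝ) : ℂ) * ∑ j ∈ Finset.range k, PhiS s (a k j, b k j)) atTop (nhds 0) by
    have := hdiff.add hPhi
    simpa using this
  rw [Metric.tendsto_nhds]
  intro ε hε
  have hr := rho_tendsto μ
  have hr2 : Tendsto (fun n : ℕ => √(∫ p, rho n p ∂μ) + ∫ p, rho n p ∂μ) atTop (nhds 0) := by
    have := ((Real.continuous_sqrt.tendsto _).comp hr).add hr
    simpa using this
  obtain ⟨n, hn1, hn2⟩ := ((hr2.eventually (gt_mem_nhds hε)).and (eventually_ge_atTop 1)).exists
  have hM : (1 : ℝ) ≤ n := by exact_mod_cast hn2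
  have hM0 : (0 : ℝ) ≤ n := by linarith
  generalize (n : ℝ) = M at *
  have hQ : Tendsto (fun k : ℕ => (1 / (k : ℝ)) * ∑ j ∈ Finset.range k, rho M (a k j, b k j)
      + 1 / k) atTop (nhds (∫ p, rho M p ∂μ)) := by
    have h1 := hμ (rho M) (rho_continuous M)
      ⟨3, fun p => by rw [abs_of_nonneg (rho_nonneg _ _)]; exact rho_le _ _⟩
    have := h1.add (tendsto_const_div_atTop_nhds_zero_nat (1 : ℝ))
    simpa using this
  have hT : Tendsto (fun k : ℕ => (∑ i ∈ Finset.range (k - 1), dlt M (a k) (b k) i) / (k : ℝ))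
      atTop (nhds 0) := by
    have := (tv_mono hM0 a hma).add (tv_mono hM0 b hmb)
    rw [add_zero] at this
    refine this.congr fun k => ?_
    rw [← add_div, ← Finset.sum_add_distrib]
    rfl
  have hE : Tendsto (fun k : ℕ => √(48 * M ^ 2 / k + 36 * M ^ 2 * (1 + 2 * |s|) *
          ((∑ i ∈ Finset.range (k - 1), dlt M (a k) (b k) i) / k)) * |s|) atTop (nhds 0) := by
    have h1 := (tendsto_const_div_atTop_nhds_zero_nat (48 * M ^ 2)).add
      (hT.const_mul (36 * M ^ 2 * (1 + 2 * |s|)))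
    rw [mul_zero, add_zero] at h1
    have h2 := ((Real.continuous_sqrt.tendsto _).comp h1).mul_const |s|
    simpa using h2
  have hall := (((Real.continuous_sqrt.tendsto _).comp hQ).add hE).add hQ
  rw [add_zero] at hall
  filter_upwards [hall.eventually (gt_mem_nhds hn1), eventually_ge_atTop 3] with k h1 h3
  rw [dist_zero_right]
  exact (char_bound hM k h3 (a k) (b k) s).trans_lt h1

/-- Empirical eigenvalue measure. -/
def empM (n : ℕ) (lam : Fin (n + 1) → ℝ) : Measure ℝ :=
  ((n + 1 : ℕ) : ENNReal)⁻¹ • ∑ i, Measure.dirac (lam i)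

theorem empM_prob (n : ℕ) (lam : Fin (n + 1) → ℝ) : IsProbabilityMeasure (empM n lam) := by
  constructor
  simp only [empM, Measure.smul_apply, Measure.finsetSum_apply, measure_univ, Finset.sum_const,
    Finset.card_univ, Fintype.card_fin, nsmul_eq_mul, mul_one, smul_eq_mul]
  exact ENNReal.inv_mul_cancel (by simp) (by simp)

theorem empM_integral {E : Type*} [NormedAddCommGroup E] [NormedSpace ℝ E] [CompleteSpace E]
    (n : ℕ) (lam : Fin (n + 1) → ℝ) (f : ℝ → E) (hf : Continuous f) :
    ∫ x, f x ∂(empM n lam) = (1 / ((n + 1 : ℕ) : ℝ)) • ∑ i, f (lam i) := by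
  unfold empM
  rw [integral_smul_measure, integral_finsetSum_measure]
  · simp only [integral_dirac]
    congr 1
    rw [ENNReal.toReal_inv, ENNReal.toReal_natCast, one_div]
  · intro i _
    exact integrable_dirac (by simp [enorm_lt_top])

/-- Uniform measure on `(-π, π]`. -/
def unifM : Measure ℝ :=
  ENNReal.ofReal (1 / (2 * Real.pi)) • (volume.restrict (Set.Ioc (-Real.pi) Real.pi))

instance unifM_prob : IsProbabilityMeasure unifM := by
  constructor
  have hp := Real.pi_pos
  simp only [unifM, Measure.smul_apply, Measure.restrict_apply MeasurableSet.univ, Set.univ_inter,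
    Real.volume_Ioc, smul_eq_mul]
  rw [← ENNReal.ofReal_mul (by positivity)]
  rw [show 1 / (2 * Real.pi) * (Real.pi - -Real.pi) = 1 by field_simp; ring]
  simp

/-- Limiting measure. -/
def limM (μ : Measure (ℝ × ℝ)) : Measure ℝ :=
  (μ.prod unifM).map (fun q : (ℝ × ℝ) × ℝ => q.1.1 + 2 * q.1.2 * Real.cos q.2)

theorem limM_meas :
    Continuous (fun q : (ℝ × ℝ) × ℝ => q.1.1 + 2 * q.1.2 * Real.cos q.2) := by fun_prop

theorem limM_prob (μ : Measure (ℝ × ℝ)) [IsProbabilityMeasure μ] :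
    IsProbabilityMeasure (limM μ) :=
  Measure.isProbabilityMeasure_map limM_meas.aemeasurable

theorem limM_integral {E : Type*} [NormedAddCommGroup E] [NormedSpace ℝ E] [CompleteSpace E]
    [SecondCountableTopology E]
    (μ : Measure (ℝ × ℝ)) [IsProbabilityMeasure μ] (f : ℝ → E) (hf : Continuous f)
    (C : ℝ) (hC : ∀ x, ‖f x‖ ≤ C) :
    ∫ x, f x ∂(limM μ) = ∫ p, ((1 / (2 * Real.pi)) • ∫ t in (-Real.pi)..Real.pi,
      f (p.1 + 2 * p.2 * Real.cos t)) ∂μ := by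
  have hp := Real.pi_pos
  unfold limM
  rw [integral_map limM_meas.aemeasurable hf.aestronglyMeasurable, integral_prod]
  · refine integral_congr_ae (Eventually.of_forall fun p => ?_)
    simp only [unifM]
    rw [integral_smul_measure, intervalIntegral.integral_of_le (by linarith),
      ENNReal.toReal_ofReal (by positivity)]
  · exact Integrable.of_bound (hf.comp limM_meas).aestronglyMeasurable C
      (Eventually.of_forall fun q => hC _)

theorem integral_even_cos (f : ℝ → ℝ) (hf : Continuous f) :
    ∫ t in (-Real.pi)..Real.pi, f (Real.cos t) = 2 * ∫ t in (0:ℝ)..Real.pi, f (Real.cos t) := by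
  have hc : Continuous fun t => f (Real.cos t) := by fun_prop
  rw [← intervalIntegral.integral_add_adjacent_intervals (b := 0)
    (hc.intervalIntegrable _ _) (hc.intervalIntegrable _ _)]
  have h := intervalIntegral.integral_comp_neg (a := 0) (b := Real.pi) fun t => f (Real.cos t)
  simp only [Real.cos_neg, neg_zero] at h
  rw [← h]; ring

/-- the trace formula for a.e. monotone sequences with entries `O(log k)` that
are `μ`-distributed for a tight probability measure `μ` on `ℝ²`. -/
theorem trace_formula_monotone_unbounded (a b : ℕ → ℕ → ℝ)
    (hma : AEMonotone a) (hmb : AEMonotone b)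
    (hloga : ∃ C : ℝ, ∀ᶠ k : ℕ in Filter.atTop, ∀ j < k, |a k j| ≤ C * Real.log k)
    (hlogb : ∃ C : ℝ, ∀ᶠ k : ℕ in Filter.atTop, ∀ j < k, |b k j| ≤ C * Real.log k)
    (μ : Measure (ℝ × ℝ)) [IsProbabilityMeasure μ]
    (htight : TightRect μ) (hμ : MuDistributedR a b μ)
    (φ : ℝ → ℝ) (hφc : Continuous φ) (hφb : ∃ C : ℝ, ∀ x, |φ x| ≤ C) :
    Filter.Tendsto (fun k : ℕ => (1 / (k : ℝ)) * jacobiTrace k (a k) (b k) φ)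
      Filter.atTop
      (nhds ((1 / Real.pi) *
        ∫ p, (∫ t in (0 : ℝ)..Real.pi, φ (p.1 + 2 * p.2 * Real.cos t)) ∂μ)) := by
  obtain ⟨C, hC⟩ := hφb
  set lam : (n : ℕ) → Fin (n + 1) → ℝ := fun n =>
    (jacobiMatrix_isHermitian (n + 1) (a (n + 1)) (b (n + 1))).eigenvalues with hlam
  set ν : ℕ → ProbabilityMeasure ℝ := fun n => ⟨empM n (lam n), empM_prob n (lam n)⟩ with hν
  set ν0 : ProbabilityMeasure ℝ := ⟨limM μ, limM_prob μ⟩ with hν0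
  have hconv : Tendsto ν atTop (nhds ν0) := by
    refine ProbabilityMeasure.tendsto_of_tendsto_charFun fun s => ?_
    have hs := (tendsto_add_atTop_iff_nat 1).2 (char_tendsto a b hma hmb μ hμ s)
    have hfc : Continuous fun x : ℝ => Complex.exp (s * x * Complex.I) := by fun_prop
    have e0 : charFun (ν0 : Measure ℝ) s = ∫ p, PhiS s p ∂μ := by
      rw [charFun_apply_real]
      change ∫ x, Complex.exp (s * x * Complex.I) ∂(limM μ) = _
      rw [limM_integral μ (fun x : ℝ => Complex.exp (s * x * Complex.I)) hfc 1 fun x => by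
        rw [← Complex.ofReal_mul, Complex.norm_exp_ofReal_mul_I]]
      simp only [PhiS, Complex.real_smul]
    rw [e0]
    refine hs.congr fun n => ?_
    rw [charFun_apply_real]
    change _ = ∫ x, Complex.exp (s * x * Complex.I) ∂(empM n (lam n))
    rw [empM_integral n (lam n) (fun x : ℝ => Complex.exp (s * x * Complex.I)) hfc,
      Complex.real_smul]
    push_cast
    rfl
  rw [ProbabilityMeasure.tendsto_iff_forall_integral_tendsto] at hconv
  have hφ := hconv (BoundedContinuousFunction.ofNormedAddCommGroup φ hφc C hC)
  rw [← tendsto_add_atTop_iff_nat 1]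
  have e0 : ∫ x, φ x ∂(limM μ) = (1 / Real.pi) *
        ∫ p, (∫ t in (0 : ℝ)..Real.pi, φ (p.1 + 2 * p.2 * Real.cos t)) ∂μ := by
    rw [limM_integral μ φ hφc C hC, ← integral_const_mul]
    refine integral_congr_ae (Eventually.of_forall fun p => ?_)
    simp only [smul_eq_mul]
    rw [integral_even_cos (fun c => φ (p.1 + 2 * p.2 * c)) (by fun_prop)]
    have := Real.pi_ne_zero
    field_simp
  rw [← e0]
  refine Tendsto.congr (fun n => ?_) hφ
  change ∫ x, φ x ∂(empM n (lam n)) = _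
  rw [empM_integral n (lam n) φ hφc, smul_eq_mul]
  rfl
end
end

section
/- Let (a^k)_k and (b^k)_k be two sequences in the class 𝒮. Then there exist a strictly increasing sequence of positive integers (k_j)_j and a probability measure μ supported in I² = [0,1]² such that for every continuous function φ on [−3,3], lim_{j→∞} (1/k_j)·Trace[φ(J(a^{k_j}, b^{k_j}))] = (1/π) ∫_{I²} ∫_0^π φ(x + 2y·cos t) dt dμ(x,y). -/
open Filter MeasureTheory

noncomputable section

theorem exists_weak_limit (a b : ℕ → ℕ → ℝ)
    (ha : ∀ k : ℕ, ∀ i < k, a k i ∈ Set.Icc (0 : ℝ) 1)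
    (hb : ∀ k : ℕ, ∀ i < k, b k i ∈ Set.Icc (0 : ℝ) 1) :
    ∃ g : ℕ → ℕ, StrictMono g ∧ (∀ j, 0 < g j) ∧
      ∃ μ : Measure (ℝ × ℝ), IsProbabilityMeasure μ ∧
        μ ((Set.Icc (0 : ℝ) 1 ×ˢ Set.Icc (0 : ℝ) 1)ᶜ) = 0 ∧
        ∀ ψ : ℝ × ℝ → ℝ, Continuous ψ →
          Filter.Tendsto
            (fun j : ℕ => (1 / (g j : ℝ)) * ∑ i : Fin (g j), ψ (a (g j) i, b (g j) i))
            Filter.atTop (nhds (∫ p, ψ p ∂μ)) := by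
  set K : Set (ℝ × ℝ) := Set.Icc (0 : ℝ) 1 ×ˢ Set.Icc (0 : ℝ) 1 with hK
  have hKc : IsCompact K := isCompact_Icc.prod isCompact_Icc
  have hKm : MeasurableSet K := hKc.isClosed.measurableSet
  have : CompactSpace K := isCompact_iff_compactSpace.1 hKc
  let pt : (k : ℕ) → Fin (k + 1) → K := fun k i =>
    ⟨(a (k + 1) i, b (k + 1) i), ⟨ha _ _ i.2, hb _ _ i.2⟩⟩
  have hpt : ∀ k, Measurable (pt k) := fun k => measurable_of_finite _
  let emp : ℕ → ProbabilityMeasure K := fun k =>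
    ⟨((PMF.uniformOfFintype (Fin (k + 1))).toMeasure).map (pt k),
      Measure.isProbabilityMeasure_map (hpt k).aemeasurable⟩
  obtain ⟨ν, f, hf, hlim⟩ := CompactSpace.tendsto_subseq emp
  refine ⟨fun j => f j + 1, fun i j hij => Nat.succ_lt_succ (hf hij), fun j => Nat.succ_pos _,
    (ν : Measure K).map Subtype.val,
    Measure.isProbabilityMeasure_map measurable_subtype_coe.aemeasurable, ?_, ?_⟩
  · rw [Measure.map_apply measurable_subtype_coe hKm.compl]
    have : (Subtype.val ⁻¹' Kᶜ : Set K) = ∅ := by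
      ext x; simp
    rw [this]; simp
  · intro ψ hψ
    rw [integral_map measurable_subtype_coe.aemeasurable hψ.aestronglyMeasurable]
    have h := (ProbabilityMeasure.tendsto_iff_forall_integral_tendsto.1 hlim)
      (BoundedContinuousFunction.mkOfCompact ⟨fun x : K => ψ x, hψ.comp continuous_subtype_val⟩)
    simp only [BoundedContinuousFunction.mkOfCompact_apply, ContinuousMap.coe_mk] at h
    refine h.congr fun j => ?_
    simp only [Function.comp, emp, ProbabilityMeasure.coe_mk]
    rw [integral_map (f := fun x : K => ψ x) (hpt _).aemeasurable
      (hψ.comp continuous_subtype_val).aestronglyMeasurable, PMF.integral_eq_sum]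
    have e : ((f j : ENNReal) + 1).toReal = (f j : ℝ) + 1 := by
      rw [ENNReal.toReal_add (by simp) (by simp)]; simp
    simp [pt, Finset.mul_sum, e]


/-- Coefficients of `z^d` in `(x + y (z + z⁻¹))^n`. -/
def Cc (x y : ℝ) : ℕ → ℤ → ℝ
  | 0, d => if d = 0 then 1 else 0
  | n + 1, d => x * Cc x y n d + y * Cc x y n (d - 1) + y * Cc x y n (d + 1)

theorem Cc_supp (x y : ℝ) (n : ℕ) : ∀ d : ℤ, (n : ℤ) < |d| → Cc x y n d = 0 := by
  induction n with
  | zero =>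
    intro d hd
    have : d ≠ 0 := by rintro rfl; simp at hd
    simp [Cc, this]
  | succ n ih =>
    intro d hd
    push_cast at hd
    rw [Cc, ih d (by grind), ih (d - 1) (by grind), ih (d + 1) (by grind)]
    ring

theorem Cc_bound (x y : ℝ) (hx : x ∈ Set.Icc (0 : ℝ) 1) (hy : y ∈ Set.Icc (0 : ℝ) 1) (n : ℕ) :
    ∀ d : ℤ, |Cc x y n d| ≤ 3 ^ n := by
  induction n with
  | zero => intro d; by_cases h : d = 0 <;> simp [Cc, h]
  | succ n ih =>
    intro d
    have h : ∀ z : ℝ, z ∈ Set.Icc (0 : ℝ) 1 → ∀ e, |z * Cc x y n e| ≤ 3 ^ n := by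
      intro z hz e
      rw [abs_mul, abs_of_nonneg hz.1]
      calc z * |Cc x y n e| ≤ 1 * |Cc x y n e| := by
            gcongr; exact hz.2
        _ ≤ 3 ^ n := by rw [one_mul]; exact ih e
    rw [Cc]
    calc _ ≤ |x * Cc x y n d| + |y * Cc x y n (d - 1)| + |y * Cc x y n (d + 1)| := abs_add_three _ _ _
      _ ≤ 3 ^ n + 3 ^ n + 3 ^ n := by
          gcongr
          · exact h x hx _
          · exact h y hy _
          · exact h y hy _
      _ = 3 ^ (n + 1) := by ring

theorem Cc_integral (x y : ℝ) (n : ℕ) : ∀ d : ℤ, Cc x y n d =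
    (1 / Real.pi) * ∫ t in (0 : ℝ)..Real.pi, (x + 2 * y * Real.cos t) ^ n * Real.cos (d * t) := by
  have hpi : Real.pi ≠ 0 := Real.pi_ne_zero
  induction n with
  | zero =>
    intro d
    by_cases h : d = 0
    · simp [Cc, h, hpi]
    · have hd : (d : ℝ) ≠ 0 := by exact_mod_cast h
      simp only [Cc, h, if_false, pow_zero, one_mul]
      rw [intervalIntegral.integral_comp_mul_left (fun t => Real.cos t) hd]
      simp [Real.sin_int_mul_pi]
  | succ n ih =>
    intro d
    have hi : ∀ e : ℤ, IntervalIntegrable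
        (fun t => (x + 2 * y * Real.cos t) ^ n * Real.cos (e * t)) volume 0 Real.pi := by
      intro e
      apply Continuous.intervalIntegrable
      fun_prop
    rw [Cc, ih, ih, ih]
    have key : ∀ t : ℝ, (x + 2 * y * Real.cos t) ^ (n + 1) * Real.cos (d * t) =
        x * ((x + 2 * y * Real.cos t) ^ n * Real.cos (d * t)) +
        y * ((x + 2 * y * Real.cos t) ^ n * Real.cos ((d - 1 : ℤ) * t)) +
        y * ((x + 2 * y * Real.cos t) ^ n * Real.cos ((d + 1 : ℤ) * t)) := by
      intro t
      have h1 : Real.cos ((d - 1 : ℤ) * t) = Real.cos (d * t) * Real.cos t +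
          Real.sin (d * t) * Real.sin t := by
        rw [← Real.cos_sub]; push_cast; ring_nf
      have h2 : Real.cos ((d + 1 : ℤ) * t) = Real.cos (d * t) * Real.cos t -
          Real.sin (d * t) * Real.sin t := by
        rw [← Real.cos_add]; push_cast; ring_nf
      rw [h1, h2]; ring
    simp_rw [key]
    rw [intervalIntegral.integral_add (((hi d).const_mul x).add ((hi (d - 1)).const_mul y))
      ((hi (d + 1)).const_mul y),
      intervalIntegral.integral_add ((hi d).const_mul x) ((hi (d - 1)).const_mul y)]
    simp only [intervalIntegral.integral_const_mul]
    ring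

theorem jacobi_apply (k : ℕ) (a b : ℕ → ℝ) (l j : Fin k) :
    jacobiMatrix k a b l j = (if (l : ℕ) = j then a j else 0) +
      (if (l : ℕ) + 1 = j then b l else 0) + (if (j : ℕ) + 1 = l then b j else 0) := by
  simp only [jacobiMatrix, Matrix.of_apply]
  split_ifs <;> first | omega | simp_all

theorem sum_mul_jacobi (k : ℕ) (a b : ℕ → ℝ) (j : Fin k) (f : ℕ → ℝ) :
    ∑ l : Fin k, f l * jacobiMatrix k a b l j = f j * a j +
      (if 1 ≤ (j : ℕ) then f (j - 1) * b (j - 1) else 0) +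
      (if (j : ℕ) + 1 < k then f (j + 1) * b j else 0) := by
  simp only [jacobi_apply, mul_add, Finset.sum_add_distrib, mul_ite, mul_zero]
  have hj := j.2
  congr 1
  · congr 1
    · rw [Fin.sum_univ_eq_sum_range (fun l => if l = (j : ℕ) then f l * a j else 0) k]
      simp [hj]
    · rw [Fin.sum_univ_eq_sum_range (fun l => if l + 1 = (j : ℕ) then f l * b l else 0) k]
      split_ifs with h
      · rw [Finset.sum_eq_single ((j : ℕ) - 1)]
        · rw [if_pos (by omega)]
        · intro l _ hl; rw [if_neg (by omega)]
        · intro hl; simp at hl; omega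
      · apply Finset.sum_eq_zero
        intro l _; rw [if_neg (by omega)]
  · rw [Fin.sum_univ_eq_sum_range (fun l => if (j : ℕ) + 1 = l then f l * b j else 0) k]
    simp

theorem sum_abs_jacobi_le (k : ℕ) (a b : ℕ → ℝ) (ha : ∀ i < k, a i ∈ Set.Icc (0 : ℝ) 1)
    (hb : ∀ i < k, b i ∈ Set.Icc (0 : ℝ) 1) (l : Fin k) :
    ∑ j : Fin k, |jacobiMatrix k a b l j| ≤ 3 := by
  have hnn : ∀ i j : Fin k, 0 ≤ jacobiMatrix k a b i j := by
    intro i j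
    rw [jacobi_apply]
    have h1 := (ha j j.2).1
    have h2 := (hb j j.2).1
    have h3 := (hb i i.2).1
    positivity
  have hsymm : ∀ j : Fin k, |jacobiMatrix k a b l j| = 1 * jacobiMatrix k a b j l := by
    intro j
    rw [abs_of_nonneg (hnn _ _), one_mul]
    have := congrFun (congrFun (jacobiMatrix_isHermitian k a b) j) l
    simpa [Matrix.conjTranspose_apply] using this
  simp_rw [hsymm]
  rw [sum_mul_jacobi k a b l (fun _ => 1)]
  have hl := l.2
  have h1 := (ha l l.2).2
  have h2 := (hb l l.2).2
  have h3 := (hb (l - 1) (by omega)).2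
  split_ifs <;> linarith

theorem card_near (k : ℕ) (p : ℤ) (m : ℕ) (c : ℝ) (hc : 0 ≤ c) :
    ∑ i : Fin k, (if |(i : ℤ) - p| ≤ m then c else 0) ≤ (2 * m + 1) * c := by
  rw [← Finset.sum_filter, Finset.sum_const, nsmul_eq_mul]
  gcongr
  have : (Finset.univ.filter fun i : Fin k => |(i : ℤ) - p| ≤ m).card ≤
      (Finset.Icc (p - m) (p + m)).card := by
    apply Finset.card_le_card_of_injOn (fun i : Fin k => (i : ℤ))
    · intro i hi
      simp [abs_le] at hi ⊢
      omega
    · intro i _ j _ h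
      simp at h
      exact Fin.ext h
  rw [Int.card_Icc] at this
  have h2 : (p + m + 1 - (p - m)).toNat = 2 * m + 1 := by omega
  rw [h2] at this
  exact_mod_cast this

theorem osc_le (k : ℕ) (a : ℕ → ℝ) (i j m : ℕ) (hi : i < k) (hj : j < k)
    (hij : |(i : ℤ) - j| ≤ m) :
    |a j - a i| ≤ ∑ l ∈ Finset.range (k - 1),
      if |(i : ℤ) - l| ≤ m then |a (l + 1) - a l| else 0 := by
  rw [abs_le] at hij
  rw [← Finset.sum_filter]
  have main : ∀ p q : ℕ, p ≤ q → q < k → (∀ l, p ≤ l → l < q → |(i : ℤ) - l| ≤ m) →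
      |a q - a p| ≤ ∑ l ∈ (Finset.range (k - 1)).filter (fun l : ℕ => |(i : ℤ) - l| ≤ m),
        |a (l + 1) - a l| := by
    intro p q hpq hq hl
    calc |a q - a p| = dist (a p) (a q) := by rw [dist_comm, Real.dist_eq]
      _ ≤ ∑ l ∈ Finset.Ico p q, dist (a l) (a (l + 1)) := dist_le_Ico_sum_dist a hpq
      _ = ∑ l ∈ Finset.Ico p q, |a (l + 1) - a l| := by
          refine Finset.sum_congr rfl fun l _ => ?_
          rw [dist_comm, Real.dist_eq]
      _ ≤ _ := by
          apply Finset.sum_le_sum_of_subset_of_nonneg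
          · intro l hl'
            simp only [Finset.mem_Ico] at hl'
            simp only [Finset.mem_filter, Finset.mem_range]
            exact ⟨by omega, hl l hl'.1 hl'.2⟩
          · intros; positivity
  rcases le_total i j with h | h
  · exact main i j h hj fun l h1 h2 => by rw [abs_le]; omega
  · rw [abs_sub_comm]
    exact main j i h hi fun l h1 h2 => by rw [abs_le]; omega


/-- Total variation of the first `k` entries. -/
def tv (k : ℕ) (a : ℕ → ℝ) : ℝ := ∑ i ∈ Finset.range (k - 1), |a (i + 1) - a i|

theorem tv_nonneg (k : ℕ) (a : ℕ → ℝ) : 0 ≤ tv k a := Finset.sum_nonneg fun _ _ => abs_nonneg _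

/-- Localized variation. -/
def locv (k : ℕ) (a : ℕ → ℝ) (m i : ℕ) : ℝ :=
  ∑ l ∈ Finset.range (k - 1), if |(i : ℤ) - l| ≤ m then |a (l + 1) - a l| else 0

theorem locv_nonneg (k : ℕ) (a : ℕ → ℝ) (m i : ℕ) : 0 ≤ locv k a m i :=
  Finset.sum_nonneg fun _ _ => by positivity

theorem sum_locv_le (k : ℕ) (a : ℕ → ℝ) (m : ℕ) :
    ∑ i : Fin k, locv k a m i ≤ (2 * m + 1) * tv k a := by
  unfold locv tv
  rw [Finset.sum_comm, Finset.mul_sum]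
  exact Finset.sum_le_sum fun l _ => card_near k l m _ (abs_nonneg _)

/-- Local error weight. -/
def wt (k : ℕ) (a b : ℕ → ℝ) (m i : ℕ) : ℝ :=
  locv k a m i + locv k b m i + (if |(i : ℤ) - 0| ≤ m then 1 else 0) +
    (if |(i : ℤ) - k| ≤ m then 1 else 0)

theorem wt_nonneg (k : ℕ) (a b : ℕ → ℝ) (m i : ℕ) : 0 ≤ wt k a b m i := by
  have := locv_nonneg k a m i
  have := locv_nonneg k b m i
  unfold wt
  positivity

theorem sum_wt_le (k : ℕ) (a b : ℕ → ℝ) (m : ℕ) :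
    ∑ i : Fin k, wt k a b m i ≤ (2 * m + 1) * (tv k a + tv k b + 2) := by
  unfold wt
  simp only [Finset.sum_add_distrib]
  have h1 := sum_locv_le k a m
  have h2 := sum_locv_le k b m
  have h3 := card_near k 0 m 1 zero_le_one
  have h4 := card_near k k m 1 zero_le_one
  linarith

theorem defect_le (k : ℕ) (a b : ℕ → ℝ) (ha : ∀ i < k, a i ∈ Set.Icc (0 : ℝ) 1)
    (hb : ∀ i < k, b i ∈ Set.Icc (0 : ℝ) 1) (n : ℕ) (i j : Fin k) :
    |∑ l : Fin k, Cc (a i) (b i) n ((l : ℤ) - i) * jacobiMatrix k a b l j -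
      Cc (a i) (b i) (n + 1) ((j : ℤ) - i)| ≤
      if |(j : ℤ) - i| ≤ (n + 2 : ℕ) then 3 ^ (n + 1) * wt k a b (n + 2) i else 0 := by
  have hi := i.2
  have hj := j.2
  have hC := Cc_bound (a i) (b i) (ha i hi) (hb i hi) n
  have hS := Cc_supp (a i) (b i) n
  rw [sum_mul_jacobi k a b j (fun l => Cc (a i) (b i) n ((l : ℤ) - i)), Cc]
  set C := Cc (a i) (b i) n with hCdef
  have hla := locv_nonneg k a (n + 2) i
  have hlb := locv_nonneg k b (n + 2) i
  have hw := wt_nonneg k a b (n + 2) i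
  have bnd : ∀ (d : ℤ) (z : ℝ), (|d| ≤ n → |z| ≤ wt k a b (n + 2) i) →
      |C d * z| ≤ 3 ^ n * wt k a b (n + 2) i := by
    intro d z h
    by_cases hd : |d| ≤ n
    · rw [abs_mul]
      exact mul_le_mul (hC d) (h hd) (abs_nonneg _) (by positivity)
    · rw [hS d (not_le.1 hd)]
      simp only [zero_mul, abs_zero]
      positivity
  have wt_a : locv k a (n + 2) i ≤ wt k a b (n + 2) i := by
    unfold wt
    have : (0 : ℝ) ≤ (if |((i : ℕ) : ℤ) - 0| ≤ (n + 2 : ℕ) then 1 else 0) := by positivity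
    have : (0 : ℝ) ≤ (if |((i : ℕ) : ℤ) - k| ≤ (n + 2 : ℕ) then 1 else 0) := by positivity
    linarith
  have wt_b : locv k b (n + 2) i ≤ wt k a b (n + 2) i := by
    unfold wt
    have : (0 : ℝ) ≤ (if |((i : ℕ) : ℤ) - 0| ≤ (n + 2 : ℕ) then 1 else 0) := by positivity
    have : (0 : ℝ) ≤ (if |((i : ℕ) : ℤ) - k| ≤ (n + 2 : ℕ) then 1 else 0) := by positivity
    linarith
  have hbi : |-b i| ≤ 1 := by
    rw [abs_neg, abs_of_nonneg (hb i hi).1]; exact (hb i hi).2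
  have wt_0 : |((i : ℕ) : ℤ) - 0| ≤ (n + 2 : ℕ) → 1 ≤ wt k a b (n + 2) i := by
    intro h
    unfold wt
    have : (0 : ℝ) ≤ (if |((i : ℕ) : ℤ) - k| ≤ (n + 2 : ℕ) then 1 else 0) := by positivity
    rw [if_pos h]
    linarith
  have wt_k : |((i : ℕ) : ℤ) - k| ≤ (n + 2 : ℕ) → 1 ≤ wt k a b (n + 2) i := by
    intro h
    unfold wt
    have : (0 : ℝ) ≤ (if |((i : ℕ) : ℤ) - 0| ≤ (n + 2 : ℕ) then 1 else 0) := by positivity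
    rw [if_pos h]
    linarith
  have e1 : ∃ z : ℝ, C ((j : ℤ) - i) * a j - a i * C ((j : ℤ) - i) = C ((j : ℤ) - i) * z ∧
      (|(j : ℤ) - i| ≤ n → |z| ≤ wt k a b (n + 2) i) := by
    refine ⟨a j - a i, by ring, fun h => (osc_le k a i j (n + 2) hi hj ?_).trans wt_a⟩
    rw [abs_le] at h ⊢
    omega
  have e2 : ∃ z : ℝ, (if 1 ≤ (j : ℕ) then C (((j - 1 : ℕ) : ℤ) - i) * b (j - 1) else 0) -
      b i * C ((j : ℤ) - i - 1) = C ((j : ℤ) - i - 1) * z ∧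
      (|(j : ℤ) - i - 1| ≤ n → |z| ≤ wt k a b (n + 2) i) := by
    split_ifs with h1
    · refine ⟨b (j - 1) - b i, ?_, fun h => (osc_le k b i (j - 1) (n + 2) hi (by omega) ?_).trans wt_b⟩
      · have : (((j - 1 : ℕ) : ℤ) - i) = (j : ℤ) - i - 1 := by omega
        rw [this]; ring
      · rw [abs_le] at h ⊢
        omega
    · refine ⟨- b i, by ring, fun h => hbi.trans (wt_0 ?_)⟩
      rw [abs_le] at h ⊢
      omega
  have e3 : ∃ z : ℝ, (if (j : ℕ) + 1 < k then C (((j + 1 : ℕ) : ℤ) - i) * b j else 0) -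
      b i * C ((j : ℤ) - i + 1) = C ((j : ℤ) - i + 1) * z ∧
      (|(j : ℤ) - i + 1| ≤ n → |z| ≤ wt k a b (n + 2) i) := by
    split_ifs with h1
    · refine ⟨b j - b i, ?_, fun h => (osc_le k b i j (n + 2) hi (by omega) ?_).trans wt_b⟩
      · have : (((j + 1 : ℕ) : ℤ) - i) = (j : ℤ) - i + 1 := by omega
        rw [this]; ring
      · rw [abs_le] at h ⊢
        omega
    · refine ⟨- b i, by ring, fun h => hbi.trans (wt_k ?_)⟩
      rw [abs_le] at h ⊢
      omega
  obtain ⟨z1, e1, b1⟩ := e1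
  obtain ⟨z2, e2, b2⟩ := e2
  obtain ⟨z3, e3, b3⟩ := e3
  have split : ∀ A B D A' B' D' : ℝ, A + B + D - (A' + B' + D') = (A - A') + (B - B') + (D - D') := by
    intros; ring
  rw [split, e1, e2, e3]
  split_ifs with hd
  · calc _ ≤ _ := abs_add_three _ _ _
      _ ≤ 3 ^ n * wt k a b (n + 2) i + 3 ^ n * wt k a b (n + 2) i
          + 3 ^ n * wt k a b (n + 2) i := by
          gcongr
          · exact bnd _ _ b1
          · exact bnd _ _ b2
          · exact bnd _ _ b3
      _ = _ := by ring
  · rw [not_le, lt_abs] at hd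
    rw [hS ((j : ℤ) - i) (by rw [lt_abs]; omega), hS ((j : ℤ) - i - 1) (by rw [lt_abs]; omega),
      hS ((j : ℤ) - i + 1) (by rw [lt_abs]; omega)]
    simp

/-- Entrywise `ℓ¹` distance of `J^n` to its local model. -/
def err (k : ℕ) (a b : ℕ → ℝ) (n : ℕ) : ℝ :=
  ∑ i : Fin k, ∑ j : Fin k,
    |(jacobiMatrix k a b ^ n) i j - Cc (a i) (b i) n ((j : ℤ) - i)|

theorem err_succ_le (k : ℕ) (a b : ℕ → ℝ) (ha : ∀ i < k, a i ∈ Set.Icc (0 : ℝ) 1)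
    (hb : ∀ i < k, b i ∈ Set.Icc (0 : ℝ) 1) (n : ℕ) :
    err k a b (n + 1) ≤ 3 * err k a b n +
      (2 * (n + 2 : ℕ) + 1) * 3 ^ (n + 1) * ((2 * (n + 2 : ℕ) + 1) * (tv k a + tv k b + 2)) := by
  set J := jacobiMatrix k a b with hJ
  have step : ∀ i j : Fin k, |(J ^ (n + 1)) i j - Cc (a i) (b i) (n + 1) ((j : ℤ) - i)| ≤
      ∑ l : Fin k, |(J ^ n) i l - Cc (a i) (b i) n ((l : ℤ) - i)| * |J l j| +
      if |(j : ℤ) - i| ≤ (n + 2 : ℕ) then 3 ^ (n + 1) * wt k a b (n + 2) i else 0 := by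
    intro i j
    have h1 : (J ^ (n + 1)) i j - Cc (a i) (b i) (n + 1) ((j : ℤ) - i) =
        ∑ l : Fin k, ((J ^ n) i l - Cc (a i) (b i) n ((l : ℤ) - i)) * J l j +
        (∑ l : Fin k, Cc (a i) (b i) n ((l : ℤ) - i) * J l j -
          Cc (a i) (b i) (n + 1) ((j : ℤ) - i)) := by
      rw [pow_succ, Matrix.mul_apply]
      simp only [sub_mul, Finset.sum_sub_distrib]
      ring
    rw [h1]
    refine (abs_add_le _ _).trans (add_le_add ?_ (defect_le k a b ha hb n i j))
    refine (Finset.abs_sum_le_sum_abs _ _).trans (le_of_eq ?_)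
    simp only [abs_mul]
  unfold err
  calc _ ≤ ∑ i : Fin k, ∑ j : Fin k,
        (∑ l : Fin k, |(J ^ n) i l - Cc (a i) (b i) n ((l : ℤ) - i)| * |J l j| +
        if |(j : ℤ) - i| ≤ (n + 2 : ℕ) then 3 ^ (n + 1) * wt k a b (n + 2) i else 0) :=
        Finset.sum_le_sum fun i _ => Finset.sum_le_sum fun j _ => step i j
    _ = ∑ i : Fin k, ∑ l : Fin k, |(J ^ n) i l - Cc (a i) (b i) n ((l : ℤ) - i)| *
          (∑ j : Fin k, |J l j|) +
        ∑ i : Fin k, ∑ j : Fin k, (if |(j : ℤ) - i| ≤ (n + 2 : ℕ) then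
          3 ^ (n + 1) * wt k a b (n + 2) i else 0) := by
        simp only [Finset.sum_add_distrib]
        congr 1
        refine Finset.sum_congr rfl fun i _ => ?_
        rw [Finset.sum_comm]
        simp only [Finset.mul_sum]
    _ ≤ ∑ i : Fin k, ∑ l : Fin k, |(J ^ n) i l - Cc (a i) (b i) n ((l : ℤ) - i)| * 3 +
        ∑ i : Fin k, (2 * (n + 2 : ℕ) + 1) * (3 ^ (n + 1) * wt k a b (n + 2) i) := by
        gcongr with i _ l _ i _
        · exact sum_abs_jacobi_le k a b ha hb l
        · exact card_near k i (n + 2) _ (mul_nonneg (by positivity) (wt_nonneg _ _ _ _ _))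
    _ ≤ _ := by
        have h := sum_wt_le k a b (n + 2)
        simp only [← Finset.sum_mul, ← Finset.mul_sum]
        rw [mul_comm _ (3 : ℝ), ← mul_assoc]
        gcongr

theorem err_bound (n : ℕ) : ∃ c : ℝ, 0 ≤ c ∧ ∀ (k : ℕ) (a b : ℕ → ℝ),
    (∀ i < k, a i ∈ Set.Icc (0 : ℝ) 1) → (∀ i < k, b i ∈ Set.Icc (0 : ℝ) 1) →
    err k a b n ≤ c * (tv k a + tv k b + 2) := by
  induction n with
  | zero =>
    refine ⟨0, le_rfl, fun k a b _ _ => ?_⟩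
    rw [zero_mul]
    unfold err
    refine (Finset.sum_eq_zero fun i _ => Finset.sum_eq_zero fun j _ => ?_).le
    rw [pow_zero, Matrix.one_apply, Cc]
    by_cases h : i = j
    · simp [h]
    · have : ¬ ((j : ℤ) - i = 0) := fun h' => h (Fin.ext (by omega))
      simp [h, this]
  | succ n ih =>
    obtain ⟨c, hc, ih⟩ := ih
    refine ⟨3 * c + (2 * (n + 2 : ℕ) + 1) * 3 ^ (n + 1) * (2 * (n + 2 : ℕ) + 1),
      by positivity, fun k a b ha hb => ?_⟩
    refine (err_succ_le k a b ha hb n).trans ?_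
    have := ih k a b ha hb
    linarith

theorem trace_pow_eq (k : ℕ) (a b : ℕ → ℝ) (n : ℕ) :
    jacobiTrace k a b (fun x => x ^ n) = (jacobiMatrix k a b ^ n).trace := by
  have hA := jacobiMatrix_isHermitian k a b
  unfold jacobiTrace
  have key : (jacobiMatrix k a b ^ n).trace =
      (Matrix.diagonal (RCLike.ofReal ∘ hA.eigenvalues : Fin k → ℝ) ^ n).trace := by
    rw [← hA.conjStarAlgAut_star_eigenvectorUnitary, ← map_pow]
    generalize jacobiMatrix k a b ^ n = M
    rw [Unitary.conjStarAlgAut_star_apply, Matrix.trace_mul_cycle, Unitary.mul_star_self_of_mem (SetLike.coe_mem _),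
      one_mul]
  rw [key, Matrix.diagonal_pow, Matrix.trace_diagonal]
  rfl

/-- The symbol average. -/
def Tav (φ : ℝ → ℝ) (p : ℝ × ℝ) : ℝ :=
  (1 / Real.pi) * ∫ t in (0 : ℝ)..Real.pi, φ (p.1 + 2 * p.2 * Real.cos t)

/-- The normalized discrepancy. -/
def disc (k : ℕ) (a b : ℕ → ℝ) (φ : ℝ → ℝ) : ℝ :=
  (1 / (k : ℝ)) * (jacobiTrace k a b φ - ∑ i : Fin k, Tav φ (a i, b i))

theorem disc_pow_le (k : ℕ) (a b : ℕ → ℝ) (n : ℕ) :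
    |disc k a b (fun x => x ^ n)| ≤ (1 / (k : ℝ)) * err k a b n := by
  unfold disc
  rw [abs_mul, abs_of_nonneg (by positivity : (0 : ℝ) ≤ 1 / k)]
  gcongr
  rw [trace_pow_eq, Matrix.trace, ← Finset.sum_sub_distrib]
  refine (Finset.abs_sum_le_sum_abs _ _).trans ?_
  unfold err
  refine Finset.sum_le_sum fun i _ => ?_
  refine le_trans (le_of_eq ?_) (Finset.single_le_sum (f := fun j : Fin k =>
    |(jacobiMatrix k a b ^ n) i j - Cc (a i) (b i) n ((j : ℤ) - i)|)
    (fun j _ => abs_nonneg _) (Finset.mem_univ i))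
  simp [Cc_integral, Tav]

theorem disc_pow_tendsto (a b : ℕ → ℕ → ℝ) (ha : MemS a) (hb : MemS b) (n : ℕ) :
    Tendsto (fun k => disc k (a k) (b k) (fun x => x ^ n)) atTop (nhds 0) := by
  obtain ⟨c, hc, h⟩ := err_bound n
  have h1 := ha.1.tendsto_div_nhds_zero
  have h2 := hb.1.tendsto_div_nhds_zero
  have h3 : Tendsto (fun k : ℕ => (2 : ℝ) / k) atTop (nhds 0) := tendsto_const_div_atTop_nhds_zero_nat 2
  have h4 := (((h1.add h2).add h3).const_mul c)
  simp only [add_zero, mul_zero] at h4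
  refine squeeze_zero_norm (fun k => ?_) h4
  rw [Real.norm_eq_abs]
  refine (disc_pow_le k _ _ n).trans ?_
  have := h k (a k) (b k) (ha.2 k) (hb.2 k)
  calc (1 / (k : ℝ)) * err k (a k) (b k) n ≤
      (1 / (k : ℝ)) * (c * (tv k (a k) + tv k (b k) + 2)) := by gcongr
    _ = _ := by unfold tv; ring


theorem eig_mem (k : ℕ) (a b : ℕ → ℝ) (ha : ∀ i < k, a i ∈ Set.Icc (0 : ℝ) 1)
    (hb : ∀ i < k, b i ∈ Set.Icc (0 : ℝ) 1) (i : Fin k) :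
    (jacobiMatrix_isHermitian k a b).eigenvalues i ∈ Set.Icc (-3 : ℝ) 3 := by
  have hA := jacobiMatrix_isHermitian k a b
  have hs := hA.eigenvalues_mem_spectrum_real i
  rw [← Matrix.spectrum_toLin', ← Module.End.hasEigenvalue_iff_mem_spectrum] at hs
  obtain ⟨l, hl⟩ := eigenvalue_mem_ball hs
  rw [mem_closedBall_iff_norm, Real.norm_eq_abs] at hl
  have h3 := sum_abs_jacobi_le k a b ha hb l
  rw [← Finset.add_sum_erase _ _ (Finset.mem_univ l)] at h3
  simp only [Real.norm_eq_abs] at hl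
  have h4 := abs_sub_abs_le_abs_sub (hA.eigenvalues i) (jacobiMatrix k a b l l)
  rw [Set.mem_Icc, ← abs_le]
  linarith

theorem arg_mem {p : ℝ × ℝ} (hp : p ∈ Set.Icc (0 : ℝ) 1 ×ˢ Set.Icc (0 : ℝ) 1) (t : ℝ) :
    p.1 + 2 * p.2 * Real.cos t ∈ Set.Icc (-3 : ℝ) 3 := by
  obtain ⟨⟨h1, h2⟩, h3, h4⟩ := hp
  have := Real.neg_one_le_cos t
  have := Real.cos_le_one t
  constructor <;> nlinarith

theorem jacobiTrace_congr (k : ℕ) (a b : ℕ → ℝ) (ha : ∀ i < k, a i ∈ Set.Icc (0 : ℝ) 1)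
    (hb : ∀ i < k, b i ∈ Set.Icc (0 : ℝ) 1) {φ ψ : ℝ → ℝ}
    (h : ∀ x ∈ Set.Icc (-3 : ℝ) 3, φ x = ψ x) : jacobiTrace k a b φ = jacobiTrace k a b ψ :=
  Finset.sum_congr rfl fun i _ => h _ (eig_mem k a b ha hb i)

theorem Tav_sub_le {φ ψ : ℝ → ℝ} (hφ : Continuous φ) (hψ : Continuous ψ) {ε : ℝ}
    (h : ∀ x ∈ Set.Icc (-3 : ℝ) 3, |φ x - ψ x| ≤ ε) {p : ℝ × ℝ}
    (hp : p ∈ Set.Icc (0 : ℝ) 1 ×ˢ Set.Icc (0 : ℝ) 1) : |Tav φ p - Tav ψ p| ≤ ε := by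
  unfold Tav
  rw [← mul_sub, ← intervalIntegral.integral_sub
    (Continuous.intervalIntegrable (by fun_prop) _ _)
    (Continuous.intervalIntegrable (by fun_prop) _ _)]
  have h1 := intervalIntegral.norm_integral_le_of_norm_le_const (a := 0) (b := Real.pi) (C := ε)
    (f := fun t => φ (p.1 + 2 * p.2 * Real.cos t) - ψ (p.1 + 2 * p.2 * Real.cos t))
    (fun t _ => h _ (arg_mem hp t))
  rw [sub_zero, abs_of_pos Real.pi_pos, Real.norm_eq_abs] at h1
  rw [abs_mul, abs_of_nonneg (by positivity)]
  have hpi := Real.pi_pos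
  calc _ ≤ (1 / Real.pi) * (ε * Real.pi) := by gcongr
    _ = ε := by field_simp

theorem disc_sub_le (k : ℕ) (a b : ℕ → ℝ) (ha : ∀ i < k, a i ∈ Set.Icc (0 : ℝ) 1)
    (hb : ∀ i < k, b i ∈ Set.Icc (0 : ℝ) 1) {φ ψ : ℝ → ℝ} (hφ : Continuous φ)
    (hψ : Continuous ψ) {ε : ℝ} (hε : 0 ≤ ε)
    (h : ∀ x ∈ Set.Icc (-3 : ℝ) 3, |φ x - ψ x| ≤ ε) :
    |disc k a b φ - disc k a b ψ| ≤ 2 * ε := by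
  have e : disc k a b φ - disc k a b ψ = (1 / (k : ℝ)) * ∑ i : Fin k,
      ((φ ((jacobiMatrix_isHermitian k a b).eigenvalues i) -
        ψ ((jacobiMatrix_isHermitian k a b).eigenvalues i)) -
        (Tav φ (a i, b i) - Tav ψ (a i, b i))) := by
    unfold disc jacobiTrace
    simp only [Finset.sum_sub_distrib]
    ring
  rw [e, abs_mul, abs_of_nonneg (by positivity : (0 : ℝ) ≤ 1 / k)]
  have : |∑ i : Fin k,
      ((φ ((jacobiMatrix_isHermitian k a b).eigenvalues i) -
        ψ ((jacobiMatrix_isHermitian k a b).eigenvalues i)) -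
        (Tav φ (a i, b i) - Tav ψ (a i, b i)))| ≤ ∑ i : Fin k, 2 * ε := by
    refine (Finset.abs_sum_le_sum_abs _ _).trans (Finset.sum_le_sum fun i _ => ?_)
    refine (abs_sub _ _).trans ?_
    have h1 := h _ (eig_mem k a b ha hb i)
    have h2 := Tav_sub_le hφ hψ h (p := (a i, b i)) ⟨ha i i.2, hb i i.2⟩
    linarith
  calc _ ≤ (1 / (k : ℝ)) * ∑ i : Fin k, 2 * ε := by gcongr
    _ ≤ 2 * ε := by
      rw [Finset.sum_const, nsmul_eq_mul, Finset.card_univ, Fintype.card_fin]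
      rcases Nat.eq_zero_or_pos k with rfl | hk
      · simp; exact hε
      · have : (k : ℝ) ≠ 0 := by positivity
        field_simp; rfl

theorem disc_poly_tendsto (a b : ℕ → ℕ → ℝ) (ha : MemS a) (hb : MemS b) (p : Polynomial ℝ) :
    Tendsto (fun k => disc k (a k) (b k) (fun x => p.eval x)) atTop (nhds 0) := by
  induction p using Polynomial.induction_on' with
  | add p q hp hq =>
    have := hp.add hq
    rw [add_zero] at this
    refine this.congr fun k => ?_
    have hT : ∀ z, Tav (fun x => (p + q).eval x) z =
        Tav (fun x => p.eval x) z + Tav (fun x => q.eval x) z := by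
      intro z
      unfold Tav
      simp only [Polynomial.eval_add]
      rw [intervalIntegral.integral_add
        (Continuous.intervalIntegrable (by fun_prop) _ _)
        (Continuous.intervalIntegrable (by fun_prop) _ _), mul_add]
    unfold disc
    simp only [hT]
    simp only [jacobiTrace, Polynomial.eval_add, Finset.sum_add_distrib]
    ring
  | monomial n c =>
    have := (disc_pow_tendsto a b ha hb n).const_mul c
    rw [mul_zero] at this
    refine this.congr fun k => ?_
    have hT : ∀ z, Tav (fun x => (Polynomial.monomial n c).eval x) z =
        c * Tav (fun x => x ^ n) z := by
      intro z
      unfold Tav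
      simp only [Polynomial.eval_monomial, intervalIntegral.integral_const_mul]
      ring
    unfold disc
    simp only [hT]
    simp only [jacobiTrace, Polynomial.eval_monomial, ← Finset.mul_sum]
    ring

theorem disc_tendsto (a b : ℕ → ℕ → ℝ) (ha : MemS a) (hb : MemS b) (φ : ℝ → ℝ)
    (hφ : Continuous φ) :
    Tendsto (fun k => disc k (a k) (b k) φ) atTop (nhds 0) := by
  rw [Metric.tendsto_atTop]
  intro ε hε
  obtain ⟨p, hp⟩ := exists_polynomial_near_of_continuousOn (-3) 3 φ hφ.continuousOn (ε / 4)
    (by positivity)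
  obtain ⟨N, hN⟩ := Metric.tendsto_atTop.1 (disc_poly_tendsto a b ha hb p) (ε / 2) (by positivity)
  refine ⟨N, fun k hk => ?_⟩
  have h1 := hN k hk
  have h2 := disc_sub_le k (a k) (b k) (ha.2 k) (hb.2 k) hφ p.continuous (ε := ε / 4)
    (by positivity) (fun x hx => by rw [abs_sub_comm]; exact (hp x hx).le)
  rw [Real.dist_eq, sub_zero] at h1 ⊢
  have h3 := abs_sub_abs_le_abs_sub (disc k (a k) (b k) φ)
    (disc k (a k) (b k) (fun x => p.eval x))
  linarith

/-- for `(a^k)ₖ, (b^k)ₖ ∈ 𝒮` there is a subsequence and a probability measure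
`μ` supported in `I²` along which the trace formula holds for every `φ ∈ C[-3,3]`. -/
theorem exists_subsequence_trace_formula (a b : ℕ → ℕ → ℝ) (ha : MemS a) (hb : MemS b) :
    ∃ g : ℕ → ℕ, StrictMono g ∧ (∀ j, 0 < g j) ∧
      ∃ μ : Measure (ℝ × ℝ), IsProbabilityMeasure μ ∧
        μ ((Set.Icc (0 : ℝ) 1 ×ˢ Set.Icc (0 : ℝ) 1)ᶜ) = 0 ∧
        ∀ φ : ℝ → ℝ, ContinuousOn φ (Set.Icc (-3 : ℝ) 3) →
          Filter.Tendsto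
            (fun j : ℕ => (1 / (g j : ℝ)) * jacobiTrace (g j) (a (g j)) (b (g j)) φ)
            Filter.atTop
            (nhds ((1 / Real.pi) *
              ∫ p, (∫ t in (0 : ℝ)..Real.pi, φ (p.1 + 2 * p.2 * Real.cos t)) ∂μ)) := by

  obtain ⟨g, hg, hpos, μ, hμ, hsupp, hlim⟩ := exists_weak_limit a b ha.2 hb.2
  refine ⟨g, hg, hpos, μ, hμ, hsupp, fun φ hφ => ?_⟩
  let φ' : ℝ → ℝ := Set.IccExtend (by norm_num : (-3 : ℝ) ≤ 3) ((Set.Icc (-3 : ℝ) 3).domRestrict φ)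
  have hφ' : Continuous φ' := (continuousOn_iff_continuous_domRestrict.1 hφ).Icc_extend'
  have heq : ∀ x ∈ Set.Icc (-3 : ℝ) 3, φ' x = φ x := fun x hx => by
    simp only [φ', Set.IccExtend_of_mem _ _ hx]
    rfl
  have hT : Continuous (Tav φ') := by
    unfold Tav
    refine continuous_const.mul ?_
    apply intervalIntegral.continuous_parametric_intervalIntegral_of_continuous'
    unfold Function.uncurry
    fun_prop
  have h_integral : (1 / Real.pi) *
      ∫ p, (∫ t in (0 : ℝ)..Real.pi, φ (p.1 + 2 * p.2 * Real.cos t)) ∂μ = ∫ p, Tav φ' p ∂μ := by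
    unfold Tav
    rw [integral_const_mul]
    congr 1
    apply integral_congr_ae
    have : ∀ᵐ p ∂μ, p ∈ Set.Icc (0 : ℝ) 1 ×ˢ Set.Icc (0 : ℝ) 1 := hsupp
    filter_upwards [this] with p hp
    apply intervalIntegral.integral_congr
    intro t _
    exact (heq _ (arg_mem hp t)).symm
  rw [h_integral]
  have h1 := ((disc_tendsto a b ha hb φ' hφ').comp hg.tendsto_atTop).add (hlim _ hT)
  rw [zero_add] at h1
  refine h1.congr fun j => ?_
  rw [← jacobiTrace_congr (g j) (a (g j)) (b (g j)) (ha.2 _) (hb.2 _) heq]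
  simp only [Function.comp, disc]
  ring
end
end

section
/- Let (a^k)_k and (b^k)_k be two sequences in the class 𝒮′ such that for every ε > 0 there exists M > 0 with #{1 ≤ j ≤ k : |a_j^k| > M}/k < ε and #{1 ≤ j ≤ k : |b_j^k| > M}/k < ε for all sufficiently large k. Then there exist a strictly increasing sequence of positive integers (k_j)_j and a probability measure μ on ℝ² such that for every bounded continuous function φ : ℝ → ℝ, lim_{j→∞} (1/k_j)·Trace[φ(J(a^{k_j}, b^{k_j}))] = (1/π) ∫_{ℝ²} ∫_0^π φ(x + 2y·cos t) dt dμ(x,y). -/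
open Filter MeasureTheory

noncomputable section

/-! ## Spectral part -/

theorem exists_eigen_data (k : ℕ) (A : Matrix (Fin k) (Fin k) ℝ) (hA : A.IsHermitian) :
    ∃ U : Fin k → Fin k → ℝ,
      (∀ v : Fin k → ℝ, ∑ i, (∑ p, U i p * v p) ^ 2 = ∑ p, v p ^ 2) ∧
      (∀ i, ∑ p, U i p ^ 2 = 1) ∧
      (∀ i (v : Fin k → ℝ), ∑ p, U i p * (A.mulVec v) p
        = hA.eigenvalues i * ∑ p, U i p * v p) := by
  refine ⟨fun i p => hA.eigenvectorBasis i p, ?_, ?_, ?_⟩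
  · intro v
    have h := hA.eigenvectorBasis.sum_sq_norm_inner_right (WithLp.toLp 2 v)
    rw [EuclideanSpace.norm_sq_eq] at h
    simpa [PiLp.inner_apply, sq_abs, mul_comm] using h
  · intro i
    have h := hA.eigenvectorBasis.orthonormal.1 i
    have h2 : ‖hA.eigenvectorBasis i‖ ^ 2 = 1 := by rw [h]; norm_num
    rw [EuclideanSpace.norm_sq_eq] at h2
    simpa [sq_abs] using h2
  · intro i v
    have h := hA.mulVec_eigenvectorBasis i
    have hT : A.transpose = A := by
      have := hA.eq
      rwa [Matrix.conjTranspose_eq_transpose_of_trivial] at this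
    change dotProduct (⇑(hA.eigenvectorBasis i)) (A.mulVec v)
      = _ * dotProduct (⇑(hA.eigenvectorBasis i)) v
    rw [Matrix.dotProduct_mulVec, ← Matrix.mulVec_transpose, hT, h, smul_dotProduct, smul_eq_mul]

theorem integral_cos_diff (p q : ℕ) :
    ∫ t in (0 : ℝ)..Real.pi, Real.cos (((p : ℝ) - q) * t) = if p = q then Real.pi else 0 := by
  split_ifs with h
  · subst h; simp
  · have hne : ((p : ℝ) - q) ≠ 0 := sub_ne_zero.mpr (by exact_mod_cast h)
    rw [intervalIntegral.integral_comp_mul_left (fun x => Real.cos x) hne]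
    have : Real.sin (((p : ℝ) - q) * Real.pi) = 0 := by
      have := Real.sin_int_mul_pi ((p : ℤ) - q)
      push_cast at this
      exact this
    simp [this]

/-- windowed vector -/
def winVec (k m c : ℕ) (f : ℕ → ℝ) : Fin k → ℝ := fun p => if (p : ℕ) / m = c then f p else 0

theorem sum_range_block {k m : ℕ} (p : Fin k) (f : ℕ → ℝ) :
    ∑ c ∈ Finset.range k, (if (p : ℕ) / m = c then f c else 0) = f ((p : ℕ) / m) := by
  rw [Finset.sum_ite_eq, if_pos]
  exact Finset.mem_range.mpr (lt_of_le_of_lt (Nat.div_le_self _ _) p.2)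

theorem block_square {k m : ℕ} (u : Fin k → ℝ) (t : ℝ) :
    ∑ c ∈ Finset.range k, ((∑ p, u p * winVec k m c (fun n => Real.cos (n * t)) p) ^ 2
      + (∑ p, u p * winVec k m c (fun n => Real.sin (n * t)) p) ^ 2)
    = ∑ p : Fin k, ∑ q : Fin k, (if (q : ℕ) / m = (p : ℕ) / m then
        u p * u q else 0) * Real.cos ((((p : ℕ) : ℝ) - (q : ℕ)) * t) := by
  have h1 : ∀ c, ((∑ p, u p * winVec k m c (fun n => Real.cos (n * t)) p) ^ 2
      + (∑ p, u p * winVec k m c (fun n => Real.sin (n * t)) p) ^ 2)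
      = ∑ p : Fin k, ∑ q : Fin k, (if (p : ℕ) / m = c then (if (q : ℕ) / m = c then
        u p * u q * Real.cos ((((p : ℕ) : ℝ) - (q : ℕ)) * t) else 0) else 0) := by
    intro c
    rw [sq, sq, Finset.sum_mul_sum, Finset.sum_mul_sum, ← Finset.sum_add_distrib]
    refine Finset.sum_congr rfl fun p _ => ?_
    rw [← Finset.sum_add_distrib]
    refine Finset.sum_congr rfl fun q _ => ?_
    unfold winVec
    rw [sub_mul, Real.cos_sub]
    split_ifs <;> ring
  simp_rw [h1]
  rw [Finset.sum_comm]
  refine Finset.sum_congr rfl fun p _ => ?_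
  rw [Finset.sum_comm]
  refine Finset.sum_congr rfl fun q _ => ?_
  rw [sum_range_block p (fun c => if (q : ℕ) / m = c then
        u p * u q * Real.cos ((((p : ℕ) : ℝ) - (q : ℕ)) * t) else 0)]
  split_ifs <;> simp

theorem integral_block_square {k m : ℕ} (u : Fin k → ℝ) (hu : ∑ p, u p ^ 2 = 1) :
    ∫ t in (0 : ℝ)..Real.pi,
      ∑ p : Fin k, ∑ q : Fin k, (if (q : ℕ) / m = (p : ℕ) / m then
        u p * u q else 0) * Real.cos ((((p : ℕ) : ℝ) - (q : ℕ)) * t) = Real.pi := by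
  rw [intervalIntegral.integral_finsetSum]
  · have : ∀ p : Fin k, ∫ t in (0 : ℝ)..Real.pi,
      ∑ q : Fin k, (if (q : ℕ) / m = (p : ℕ) / m then
        u p * u q else 0) * Real.cos ((((p : ℕ) : ℝ) - (q : ℕ)) * t) = u p ^ 2 * Real.pi := by
      intro p
      rw [intervalIntegral.integral_finsetSum]
      · simp_rw [intervalIntegral.integral_const_mul, integral_cos_diff]
        rw [Finset.sum_eq_single p]
        · simp [sq]
        · intro q _ hq
          rw [if_neg (c := (p : ℕ) = q), mul_zero]
          intro h; exact hq (Fin.ext h.symm)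
        · simp
      · intro q _
        apply Continuous.intervalIntegrable
        fun_prop
    simp_rw [this]
    rw [← Finset.sum_mul, hu, one_mul]
  · intro q _
    apply Continuous.intervalIntegrable
    fun_prop

theorem trace_compare (k m : ℕ) (a b : ℕ → ℝ) (α β : ℕ → ℝ) (φ : ℝ → ℝ)
    (K : NNReal) (hφ : LipschitzWith K φ) (E : ℝ)
    (hE : ∀ t : ℝ, ∑ c ∈ Finset.range k,
      (∑ p, ((jacobiMatrix k a b).mulVec (winVec k m c (fun n => Real.cos (n * t))) p
          - (α c + 2 * β c * Real.cos t) * winVec k m c (fun n => Real.cos (n * t)) p) ^ 2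
      + ∑ p, ((jacobiMatrix k a b).mulVec (winVec k m c (fun n => Real.sin (n * t))) p
          - (α c + 2 * β c * Real.cos t) * winVec k m c (fun n => Real.sin (n * t)) p) ^ 2) ≤ E) :
    |Real.pi * jacobiTrace k a b φ - ∑ p ∈ Finset.range k,
      ∫ t in (0 : ℝ)..Real.pi, φ (α (p / m) + 2 * β (p / m) * Real.cos t)|
      ≤ Real.pi * (K * √(E * k)) := by
  obtain ⟨U, hU1, hU2, hU3⟩ := exists_eigen_data k _ (jacobiMatrix_isHermitian k a b)
  set lam := (jacobiMatrix_isHermitian k a b).eigenvalues with hlam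
  set W : ℝ → ℕ → Fin k → ℝ := fun t c i =>
    (∑ p, U i p * winVec k m c (fun n => Real.cos (n * t)) p) ^ 2
      + (∑ p, U i p * winVec k m c (fun n => Real.sin (n * t)) p) ^ 2 with hW
  set Q : Fin k → ℝ → ℝ := fun i t => ∑ p : Fin k, ∑ q : Fin k, (if (q : ℕ) / m = (p : ℕ) / m then
        U i p * U i q else 0) * Real.cos ((((p : ℕ) : ℝ) - (q : ℕ)) * t) with hQ
  have hφc := hφ.continuous
  have hWnn : ∀ t c i, 0 ≤ W t c i := fun t c i => by positivity
  have hWsum : ∀ t c, ∑ i, W t c i = ∑ p : Fin k, if (p : ℕ) / m = c then (1 : ℝ) else 0 := by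
    intro t c
    simp only [hW]
    rw [Finset.sum_add_distrib, hU1, hU1, ← Finset.sum_add_distrib]
    refine Finset.sum_congr rfl fun p _ => ?_
    unfold winVec
    split_ifs
    · exact Real.cos_sq_add_sin_sq _
    · simp
  have hT : ∀ t, ∑ c ∈ Finset.range k, ∑ i,
      (φ (lam i) - φ (α c + 2 * β c * Real.cos t)) * W t c i
      = ∑ i, φ (lam i) * Q i t
        - ∑ p ∈ Finset.range k, φ (α (p / m) + 2 * β (p / m) * Real.cos t) := by
    intro t
    simp_rw [sub_mul, Finset.sum_sub_distrib]
    congr 1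
    · rw [Finset.sum_comm]
      refine Finset.sum_congr rfl fun i _ => ?_
      rw [← Finset.mul_sum, hQ]
      simp only [hW]
      rw [block_square]
    · simp_rw [← Finset.mul_sum, hWsum, Finset.mul_sum]
      rw [Finset.sum_comm, ← Fin.sum_univ_eq_sum_range
        (fun p => φ (α (p / m) + 2 * β (p / m) * Real.cos t)) k]
      refine Finset.sum_congr rfl fun p _ => ?_
      rw [← sum_range_block p (fun c => φ (α c + 2 * β c * Real.cos t))]
      refine Finset.sum_congr rfl fun c _ => ?_
      split_ifs <;> simp
  have hbound : ∀ t, ‖∑ i, φ (lam i) * Q i t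
        - ∑ p ∈ Finset.range k, φ (α (p / m) + 2 * β (p / m) * Real.cos t)‖
        ≤ K * √(E * k) := by
    intro t
    rw [← hT, Real.norm_eq_abs]
    rw [← Finset.sum_product' (Finset.range k) Finset.univ (fun c i =>
      (φ (lam i) - φ (α c + 2 * β c * Real.cos t)) * W t c i)]
    have hcs := Finset.sum_sq_le_sum_mul_sum_of_sq_le_mul
      (Finset.range k ×ˢ (Finset.univ : Finset (Fin k)))
      (r := fun x => |lam x.2 - (α x.1 + 2 * β x.1 * Real.cos t)| * W t x.1 x.2)
      (f := fun x => (lam x.2 - (α x.1 + 2 * β x.1 * Real.cos t)) ^ 2 * W t x.1 x.2)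
      (g := fun x => W t x.1 x.2)
      (fun x _ => mul_nonneg (sq_nonneg _) (hWnn _ _ _)) (fun x _ => hWnn _ _ _)
      (fun x _ => le_of_eq (by rw [mul_pow, sq_abs]; ring))
    have hg : ∑ x ∈ (Finset.range k ×ˢ (Finset.univ : Finset (Fin k))), W t x.1 x.2 = k := by
      rw [Finset.sum_product' (Finset.range k) Finset.univ (fun c i => W t c i)]
      simp_rw [hWsum]
      rw [Finset.sum_comm]
      have : ∀ p : Fin k, ∑ c ∈ Finset.range k, (if (p : ℕ) / m = c then (1 : ℝ) else 0) = 1 :=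
        fun p => sum_range_block p (fun _ => 1)
      simp [this]
    have hf : ∑ x ∈ (Finset.range k ×ˢ (Finset.univ : Finset (Fin k))),
        (lam x.2 - (α x.1 + 2 * β x.1 * Real.cos t)) ^ 2 * W t x.1 x.2 ≤ E := by
      refine le_trans (le_of_eq ?_) (hE t)
      rw [Finset.sum_product' (Finset.range k) Finset.univ
        (fun c i => (lam i - (α c + 2 * β c * Real.cos t)) ^ 2 * W t c i)]
      refine Finset.sum_congr rfl fun c _ => ?_
      rw [← hU1 (fun p => (jacobiMatrix k a b).mulVec (winVec k m c (fun n => Real.cos (n * t))) p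
          - (α c + 2 * β c * Real.cos t) * winVec k m c (fun n => Real.cos (n * t)) p),
        ← hU1 (fun p => (jacobiMatrix k a b).mulVec (winVec k m c (fun n => Real.sin (n * t))) p
          - (α c + 2 * β c * Real.cos t) * winVec k m c (fun n => Real.sin (n * t)) p),
        ← Finset.sum_add_distrib]
      refine Finset.sum_congr rfl fun i _ => ?_
      simp_rw [mul_sub, Finset.sum_sub_distrib]
      rw [hU3, hU3]
      simp_rw [mul_left_comm (U i _), ← Finset.mul_sum]
      simp only [hW]
      ring
    calc _ ≤ ∑ x ∈ (Finset.range k ×ˢ (Finset.univ : Finset (Fin k))),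
          K * (|lam x.2 - (α x.1 + 2 * β x.1 * Real.cos t)| * W t x.1 x.2) := by
          refine (Finset.abs_sum_le_sum_abs _ _).trans (Finset.sum_le_sum fun x _ => ?_)
          rw [abs_mul, abs_of_nonneg (hWnn _ _ _), ← mul_assoc]
          refine mul_le_mul_of_nonneg_right ?_ (hWnn _ _ _)
          have := hφ.dist_le_mul (lam x.2) (α x.1 + 2 * β x.1 * Real.cos t)
          simpa [Real.dist_eq] using this
      _ ≤ K * √(E * k) := by
          rw [← Finset.mul_sum]
          refine mul_le_mul_of_nonneg_left ?_ K.2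
          apply Real.le_sqrt_of_sq_le
          refine hcs.trans ?_
          rw [hg]
          exact mul_le_mul_of_nonneg_right hf (Nat.cast_nonneg _)
  have hint := intervalIntegral.norm_integral_le_of_norm_le_const (a := 0) (b := Real.pi)
    (fun t _ => hbound t)
  have hQc : ∀ i, Continuous (Q i) := by
    intro i; simp only [hQ]; fun_prop
  rw [intervalIntegral.integral_sub, intervalIntegral.integral_finsetSum,
    intervalIntegral.integral_finsetSum] at hint
  · simp_rw [intervalIntegral.integral_const_mul] at hint
    have hQi : ∀ i, ∫ t in (0 : ℝ)..Real.pi, Q i t = Real.pi :=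
      fun i => integral_block_square (U i) (hU2 i)
    simp_rw [hQi] at hint
    rw [← Finset.sum_mul, sub_zero, abs_of_pos Real.pi_pos, Real.norm_eq_abs] at hint
    unfold jacobiTrace
    rw [mul_comm Real.pi, mul_comm Real.pi]
    exact hint
  · intro i _
    apply Continuous.intervalIntegrable
    fun_prop
  · intro i _
    apply Continuous.intervalIntegrable
    fun_prop
  · apply Continuous.intervalIntegrable
    fun_prop
  · apply Continuous.intervalIntegrable
    fun_prop

/-! ## Residual estimate -/

theorem jacobi_mulVec (k : ℕ) (a b : ℕ → ℝ) (v : ℕ → ℝ) (p : Fin k) :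
    (jacobiMatrix k a b).mulVec (fun q => v q) p
      = a p * v p + (if (p : ℕ) + 1 < k then b p * v (p + 1) else 0)
        + (if 0 < (p : ℕ) then b (p - 1) * v (p - 1) else 0) := by
  have hp := p.2
  have h1 : ∀ q : Fin k, jacobiMatrix k a b p q * v q =
      (fun n : ℕ => (if (p : ℕ) = n then a n * v n else 0)
        + (if (p : ℕ) + 1 = n then b p * v n else 0)
        + (if (p : ℕ) - 1 = n then (if 0 < (p : ℕ) then b n * v n else 0) else 0)) q := by
    intro q
    simp only [jacobiMatrix, Matrix.of_apply]
    split_ifs <;> first | omega | simp_all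
  unfold Matrix.mulVec dotProduct
  simp_rw [h1]
  rw [Fin.sum_univ_eq_sum_range (fun n : ℕ => (if (p : ℕ) = n then a n * v n else 0)
        + (if (p : ℕ) + 1 = n then b p * v n else 0)
        + (if (p : ℕ) - 1 = n then (if 0 < (p : ℕ) then b n * v n else 0) else 0)) k]
  rw [Finset.sum_add_distrib, Finset.sum_add_distrib, Finset.sum_ite_eq, Finset.sum_ite_eq,
    Finset.sum_ite_eq, if_pos (Finset.mem_range.mpr hp),
    if_pos (Finset.mem_range.mpr (by omega : (p : ℕ) - 1 < k))]
  simp only [Finset.mem_range]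

theorem coef_sum (k i j : ℕ) (P : Prop) [Decidable P] (x L : ℝ) (β : ℕ → ℝ)
    (hx : P → |x| ≤ L) (hβ : |β j| ≤ L) :
    ∑ c ∈ Finset.range k, ((if P ∧ i = c then x else 0) - (if j = c then β c else 0)) ^ 2
      ≤ if P ∧ i = j then (x - β j) ^ 2 else 2 * L ^ 2 := by
  have hβ2 : β j ^ 2 ≤ L ^ 2 := sq_le_sq' (by linarith [neg_abs_le (β j)]) (le_trans (le_abs_self _) hβ)
  split_ifs with h
  · obtain ⟨hP, rfl⟩ := h
    have : ∀ c ∈ Finset.range k,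
        ((if P ∧ i = c then x else 0) - (if i = c then β c else 0)) ^ 2
        = if i = c then (x - β c) ^ 2 else 0 := by
      intro c _
      by_cases hc : i = c <;> simp [hP, hc]
    rw [Finset.sum_congr rfl this, Finset.sum_ite_eq]
    split_ifs
    · exact le_rfl
    · positivity
  · have : ∀ c ∈ Finset.range k,
        ((if P ∧ i = c then x else 0) - (if j = c then β c else 0)) ^ 2
        ≤ (if i = c then (if P then x ^ 2 else 0) else 0) + if j = c then β c ^ 2 else 0 := by
      intro c _
      by_cases hP : P
      · by_cases hc : i = c
        · have : j ≠ c := by rintro rfl; exact h ⟨hP, hc⟩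
          simp [hP, hc, this]
        · by_cases hj : j = c <;> simp [hP, hc, hj]
      · by_cases hj : j = c <;> simp [hP, hj]
    refine (Finset.sum_le_sum this).trans ?_
    rw [Finset.sum_add_distrib, Finset.sum_ite_eq, Finset.sum_ite_eq]
    have e1 : (if i ∈ Finset.range k then (if P then x ^ 2 else 0) else 0) ≤ L ^ 2 := by
      split_ifs with h1 h2
      · exact sq_le_sq' (by linarith [neg_abs_le x, hx h2]) (le_trans (le_abs_self _) (hx h2))
      · positivity
      · positivity
    have e2 : (if j ∈ Finset.range k then β j ^ 2 else 0) ≤ L ^ 2 := by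
      split_ifs
      · exact hβ2
      · positivity
    linarith

theorem edge_count1 (k m : ℕ) :
    (∑ p ∈ Finset.range k, if p + 1 < k ∧ (p + 1) / m = p / m then (0 : ℝ) else 1)
      ≤ (k / m : ℕ) + 1 := by
  have hconv : ∀ p ∈ Finset.range k, (if p + 1 < k ∧ (p + 1) / m = p / m then (0 : ℝ) else 1)
      = if ¬ (p + 1 < k ∧ (p + 1) / m = p / m) then (1 : ℝ) else 0 := by
    intro p _
    rw [ite_not]
  rw [Finset.sum_congr rfl hconv, ← Finset.sum_filter, Finset.sum_const, nsmul_eq_mul, mul_one]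
  have : (Finset.range k).filter (fun p => ¬ (p + 1 < k ∧ (p + 1) / m = p / m))
      ⊆ insert (k - 1) ((Finset.range k).filter (fun p => m ∣ p + 1)) := by
    intro p hp
    simp only [Finset.mem_filter, Finset.mem_range, Finset.mem_insert] at hp ⊢
    obtain ⟨h1, h2⟩ := hp
    by_cases h3 : p + 1 < k
    · right
      refine ⟨h1, ?_⟩
      by_contra h4
      exact h2 ⟨h3, by rw [Nat.succ_div, if_neg h4, add_zero]⟩
    · left; omega
  have h := (Finset.card_le_card this).trans (Finset.card_insert_le _ _)
  rw [Nat.card_multiples] at h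
  exact_mod_cast h

theorem edge_count2 (k m : ℕ) :
    (∑ p ∈ Finset.range k, if 0 < p ∧ (p - 1) / m = p / m then (0 : ℝ) else 1)
      ≤ (k / m : ℕ) + 1 := by
  rcases k with _ | k
  · simp
  · rw [Finset.sum_range_succ']
    have h1 := edge_count1 (k + 1) m
    rw [Finset.sum_range_succ] at h1
    simp only [lt_irrefl, false_and, if_false] at h1 ⊢
    refine le_trans (add_le_add_left (Finset.sum_le_sum fun p hp => ?_) _) h1
    have := Finset.mem_range.mp hp
    simp only [Nat.add_sub_cancel, Nat.succ_pos, true_and]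
    by_cases h : p / m = (p + 1) / m
    · simp [h, this]
    · simp [h, Ne.symm h]

theorem residual_bound (k m : ℕ) (a b α β : ℕ → ℝ) (L t : ℝ)
    (hb : ∀ i < k, |b i| ≤ L) (hβ : ∀ i < k, |β (i / m)| ≤ L) (f : ℝ → ℝ)
    (hf1 : ∀ x, |f x| ≤ 1) (hf2 : ∀ x, f (x + 1) + f (x - 1) = 2 * Real.cos t * f x) :
    ∑ c ∈ Finset.range k,
      ∑ p, ((jacobiMatrix k a b).mulVec (winVec k m c (fun n => f n)) p
          - (α c + 2 * β c * Real.cos t) * winVec k m c (fun n => f n) p) ^ 2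
      ≤ 3 * (∑ p ∈ Finset.range k, (a p - α (p / m)) ^ 2
        + 2 * ∑ p ∈ Finset.range k, (b p - β (p / m)) ^ 2 + 4 * L ^ 2 * ((k / m : ℕ) + 1)) := by
  have hsq : ∀ x, f x ^ 2 ≤ 1 := fun x => by
    rw [← sq_abs]; exact pow_le_one₀ (abs_nonneg _) (hf1 x)
  have hpt : ∀ c, ∀ p : Fin k, ((jacobiMatrix k a b).mulVec (winVec k m c (fun n => f n)) p
          - (α c + 2 * β c * Real.cos t) * winVec k m c (fun n => f n) p) ^ 2
      ≤ 3 * ((if (p : ℕ) / m = c then (a p - α c) ^ 2 else 0)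
        + ((if (p : ℕ) + 1 < k ∧ ((p : ℕ) + 1) / m = c then b p else 0)
          - (if (p : ℕ) / m = c then β c else 0)) ^ 2
        + ((if 0 < (p : ℕ) ∧ ((p : ℕ) - 1) / m = c then b (p - 1) else 0)
          - (if (p : ℕ) / m = c then β c else 0)) ^ 2) := by
    intro c p
    have e := jacobi_mulVec k a b (fun n => if n / m = c then f n else 0) p
    have e' : (jacobiMatrix k a b).mulVec (winVec k m c (fun n => f n)) p
        - (α c + 2 * β c * Real.cos t) * winVec k m c (fun n => f n) p
        = (if (p : ℕ) / m = c then (a p - α c) else 0) * f p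
        + ((if (p : ℕ) + 1 < k ∧ ((p : ℕ) + 1) / m = c then b p else 0)
          - (if (p : ℕ) / m = c then β c else 0)) * f ((p : ℕ) + 1)
        + ((if 0 < (p : ℕ) ∧ ((p : ℕ) - 1) / m = c then b (p - 1) else 0)
          - (if (p : ℕ) / m = c then β c else 0)) * f ((p : ℕ) - 1) := by
      have hw : winVec k m c (fun n => f n) = fun q : Fin k => if (q : ℕ) / m = c then f q else 0 := rfl
      rw [hw, e]
      have h2 := hf2 (p : ℕ)
      have e3 : (if 0 < (p : ℕ) then b (p - 1) *
          (if ((p : ℕ) - 1) / m = c then f (((p : ℕ) - 1 : ℕ) : ℝ) else 0) else 0)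
          = (if 0 < (p : ℕ) ∧ ((p : ℕ) - 1) / m = c then b (p - 1) else 0) * f ((p : ℕ) - 1) := by
        by_cases h0 : 0 < (p : ℕ)
        · rw [Nat.cast_sub (by omega : 1 ≤ (p : ℕ)), Nat.cast_one]
          by_cases h1 : ((p : ℕ) - 1) / m = c <;> simp [h0, h1]
        · simp [h0]
      have e2 : (if (p : ℕ) + 1 < k then b p *
          (if ((p : ℕ) + 1) / m = c then f (((p : ℕ) + 1 : ℕ) : ℝ) else 0) else 0)
          = (if (p : ℕ) + 1 < k ∧ ((p : ℕ) + 1) / m = c then b p else 0) * f ((p : ℕ) + 1) := by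
        rw [Nat.cast_add, Nat.cast_one]
        by_cases h0 : (p : ℕ) + 1 < k <;>
          by_cases h1 : ((p : ℕ) + 1) / m = c <;> simp [h0, h1]
      rw [e3, e2]
      by_cases hc : (p : ℕ) / m = c
      · simp only [hc, if_true]
        linear_combination β c * h2
      · simp only [hc, if_false]
        ring
    rw [e']
    have e1 : (if (p : ℕ) / m = c then (a p - α c) ^ 2 else 0)
        = (if (p : ℕ) / m = c then (a p - α c) else 0) ^ 2 := by
      split_ifs <;> simp
    rw [e1]
    generalize (if (p : ℕ) / m = c then (a p - α c) else 0) = A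
    generalize ((if (p : ℕ) + 1 < k ∧ ((p : ℕ) + 1) / m = c then b p else 0)
          - (if (p : ℕ) / m = c then β c else 0)) = B
    generalize ((if 0 < (p : ℕ) ∧ ((p : ℕ) - 1) / m = c then b (p - 1) else 0)
          - (if (p : ℕ) / m = c then β c else 0)) = C
    have g1 := mul_le_mul_of_nonneg_left (hsq (p : ℕ)) (sq_nonneg A)
    have g2 := mul_le_mul_of_nonneg_left (hsq ((p : ℕ) + 1)) (sq_nonneg B)
    have g3 := mul_le_mul_of_nonneg_left (hsq ((p : ℕ) - 1)) (sq_nonneg C)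
    generalize f (p : ℕ) = x at *
    generalize f ((p : ℕ) + 1) = y at *
    generalize f ((p : ℕ) - 1) = z at *
    nlinarith [sq_nonneg (A * x - B * y), sq_nonneg (A * x - C * z), sq_nonneg (B * y - C * z)]
  have hA : ∀ p : Fin k, ∑ c ∈ Finset.range k, ((jacobiMatrix k a b).mulVec
          (winVec k m c (fun n => f n)) p
          - (α c + 2 * β c * Real.cos t) * winVec k m c (fun n => f n) p) ^ 2
      ≤ (fun p : ℕ => 3 * ((a p - α (p / m)) ^ 2
        + ((b p - β (p / m)) ^ 2 + 2 * L ^ 2 *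
            (if p + 1 < k ∧ (p + 1) / m = p / m then (0 : ℝ) else 1))
        + ((if 0 < p then (b (p - 1) - β ((p - 1) / m)) ^ 2 else 0) + 2 * L ^ 2 *
            (if 0 < p ∧ (p - 1) / m = p / m then (0 : ℝ) else 1)))) p := by
    intro p
    refine (Finset.sum_le_sum fun c _ => hpt c p).trans ?_
    rw [← Finset.mul_sum, Finset.sum_add_distrib, Finset.sum_add_distrib]
    refine mul_le_mul_of_nonneg_left ?_ (by norm_num)
    refine add_le_add (add_le_add ?_ ?_) ?_
    · exact le_of_eq (sum_range_block p (fun c => (a p - α c) ^ 2))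
    · refine (coef_sum k _ _ _ _ L β (fun _ => hb p p.2) (hβ p p.2)).trans ?_
      split_ifs
      · simp
      · nlinarith [sq_nonneg (b p - β (p / m))]
    · refine (coef_sum k _ _ _ _ L β (fun _ => hb (p - 1) (by have := p.2; omega)) (hβ p p.2)).trans ?_
      by_cases h : 0 < (p : ℕ) ∧ ((p : ℕ) - 1) / m = p / m
      · rw [if_pos h, if_pos h, if_pos h.1, h.2]; simp
      · rw [if_neg h, if_neg h]
        have : (0 : ℝ) ≤ (if 0 < (p : ℕ) then (b (p - 1) - β ((p - 1) / m)) ^ 2 else 0) := by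
          split_ifs <;> positivity
        linarith
  rw [Finset.sum_comm]
  refine (Finset.sum_le_sum fun p _ => hA p).trans ?_
  rw [Fin.sum_univ_eq_sum_range (fun p : ℕ => 3 * ((a p - α (p / m)) ^ 2
        + ((b p - β (p / m)) ^ 2 + 2 * L ^ 2 *
            (if p + 1 < k ∧ (p + 1) / m = p / m then (0 : ℝ) else 1))
        + ((if 0 < p then (b (p - 1) - β ((p - 1) / m)) ^ 2 else 0) + 2 * L ^ 2 *
            (if 0 < p ∧ (p - 1) / m = p / m then (0 : ℝ) else 1)))) k]
  rw [← Finset.mul_sum]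
  simp only [Finset.sum_add_distrib, ← Finset.mul_sum]
  have hshift : ∑ p ∈ Finset.range k, (if 0 < p then (b (p - 1) - β ((p - 1) / m)) ^ 2 else 0)
      ≤ ∑ p ∈ Finset.range k, (b p - β (p / m)) ^ 2 := by
    rcases k with _ | k
    · simp
    · rw [Finset.sum_range_succ', Finset.sum_range_succ]
      simp only [Nat.succ_pos, if_true, Nat.add_sub_cancel, lt_irrefl, if_false]
      exact add_le_add le_rfl (sq_nonneg _)
  have c1 := mul_le_mul_of_nonneg_left (edge_count1 k m) (by positivity : (0 : ℝ) ≤ 2 * L ^ 2)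
  have c2 := mul_le_mul_of_nonneg_left (edge_count2 k m) (by positivity : (0 : ℝ) ≤ 2 * L ^ 2)
  nlinarith [c1, c2, hshift]

theorem dev_sum (k m : ℕ) (hm : 0 < m) (a : ℕ → ℝ) :
    ∑ p ∈ Finset.range k, |a p - a (m * (p / m))|
      ≤ m * ∑ i ∈ Finset.range (k - 1), |a (i + 1) - a i| := by
  have h1 : ∀ p ∈ Finset.range k, |a p - a (m * (p / m))|
      ≤ ∑ i ∈ Finset.range (k - 1), if p ∈ Finset.Ioc i (i + m) then |a (i + 1) - a i| else 0 := by
    intro p hp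
    have hp' := Finset.mem_range.mp hp
    have hle : m * (p / m) ≤ p := Nat.mul_div_le p m
    have hlt : p < m * (p / m) + m := by
      have := Nat.div_add_mod p m
      have := Nat.mod_lt p hm
      omega
    rw [← Finset.sum_filter, ← Finset.sum_Ico_sub a hle]
    refine (Finset.abs_sum_le_sum_abs _ _).trans ?_
    refine Finset.sum_le_sum_of_subset_of_nonneg ?_ (fun _ _ _ => abs_nonneg _)
    intro i hi
    simp only [Finset.mem_Ico, Finset.mem_filter, Finset.mem_range, Finset.mem_Ioc] at hi ⊢
    omega
  refine (Finset.sum_le_sum h1).trans ?_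
  rw [Finset.sum_comm, Finset.mul_sum]
  refine Finset.sum_le_sum fun i _ => ?_
  rw [← Finset.sum_filter, Finset.sum_const, nsmul_eq_mul]
  refine mul_le_mul_of_nonneg_right ?_ (abs_nonneg _)
  have : (Finset.range k).filter (fun p => p ∈ Finset.Ioc i (i + m)) ⊆ Finset.Ioc i (i + m) :=
    fun p hp => (Finset.mem_filter.mp hp).2
  have h := Finset.card_le_card this
  rw [Nat.card_Ioc] at h
  exact_mod_cast (by omega : _ ≤ m)

theorem dev_sq (k m : ℕ) (hm : 0 < m) (a : ℕ → ℝ) (L : ℝ) (ha : ∀ i < k, |a i| ≤ L) :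
    ∑ p ∈ Finset.range k, (a p - a (m * (p / m))) ^ 2
      ≤ 2 * L * (m * ∑ i ∈ Finset.range (k - 1), |a (i + 1) - a i|) := by
  rcases Nat.eq_zero_or_pos k with rfl | hk
  · simp
  have hL : 0 ≤ L := (abs_nonneg _).trans (ha 0 hk)
  refine le_trans ?_ (mul_le_mul_of_nonneg_left (dev_sum k m hm a) (by positivity))
  rw [Finset.mul_sum]
  refine Finset.sum_le_sum fun p hp => ?_
  have hp' := Finset.mem_range.mp hp
  rw [← sq_abs, sq]
  refine mul_le_mul_of_nonneg_right ?_ (abs_nonneg _)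
  have := abs_sub (a p) (a (m * (p / m)))
  have h1 := ha p hp'
  have h2 := ha (m * (p / m)) ((Nat.mul_div_le p m).trans_lt hp')
  linarith

theorem trace_compare_final (k m : ℕ) (hm : 0 < m) (a b : ℕ → ℝ) (φ : ℝ → ℝ)
    (K : NNReal) (hφ : LipschitzWith K φ) (L : ℝ)
    (ha : ∀ i < k, |a i| ≤ L) (hb : ∀ i < k, |b i| ≤ L) (D : ℝ)
    (hDa : m * ∑ i ∈ Finset.range (k - 1), |a (i + 1) - a i| ≤ D)
    (hDb : m * ∑ i ∈ Finset.range (k - 1), |b (i + 1) - b i| ≤ D) :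
    |Real.pi * jacobiTrace k a b φ - ∑ p ∈ Finset.range k,
      ∫ t in (0 : ℝ)..Real.pi, φ (a p + 2 * b p * Real.cos t)|
      ≤ Real.pi * (K * √(6 * (6 * L * D + 4 * L ^ 2 * ((k / m : ℕ) + 1)) * k))
        + Real.pi * (K * (3 * D)) := by
  rcases Nat.eq_zero_or_pos k with rfl | hk
  · simp only [jacobiTrace, Finset.univ_eq_empty, Finset.sum_empty, Finset.range_zero, mul_zero,
      sub_zero, abs_zero]
    have : 0 ≤ D := le_trans (by positivity) hDa
    have := Real.pi_pos
    positivity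
  have hL : 0 ≤ L := (abs_nonneg _).trans (ha 0 hk)
  have hφc := hφ.continuous
  have hβ : ∀ i < k, |b (m * (i / m))| ≤ L :=
    fun i hi => hb _ ((Nat.mul_div_le i m).trans_lt hi)
  have hA2 := (dev_sq k m hm a L ha).trans (mul_le_mul_of_nonneg_left hDa (by positivity))
  have hB2 := (dev_sq k m hm b L hb).trans (mul_le_mul_of_nonneg_left hDb (by positivity))
  have hmain := trace_compare k m a b (fun c => a (m * c)) (fun c => b (m * c)) φ K hφ
    (6 * (6 * L * D + 4 * L ^ 2 * ((k / m : ℕ) + 1))) (by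
      intro t
      rw [Finset.sum_add_distrib]
      have r1 := residual_bound k m a b (fun c => a (m * c)) (fun c => b (m * c)) L t hb hβ
        (fun x => Real.cos (x * t)) (fun x => Real.abs_cos_le_one _)
        (fun x => by
          rw [add_mul, sub_mul, one_mul, Real.cos_add, Real.cos_sub]; ring)
      have r2 := residual_bound k m a b (fun c => a (m * c)) (fun c => b (m * c)) L t hb hβ
        (fun x => Real.sin (x * t)) (fun x => Real.abs_sin_le_one _)
        (fun x => by
          rw [add_mul, sub_mul, one_mul, Real.sin_add, Real.sin_sub]; ring)
      refine (add_le_add r1 r2).trans ?_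
      linarith)
  have hcomp : |∑ p ∈ Finset.range k, (∫ t in (0 : ℝ)..Real.pi,
        φ (a (m * (p / m)) + 2 * b (m * (p / m)) * Real.cos t))
      - ∑ p ∈ Finset.range k, ∫ t in (0 : ℝ)..Real.pi, φ (a p + 2 * b p * Real.cos t)|
      ≤ Real.pi * (K * (3 * D)) := by
    rw [← Finset.sum_sub_distrib]
    have : ∀ p ∈ Finset.range k, |(∫ t in (0 : ℝ)..Real.pi,
        φ (a (m * (p / m)) + 2 * b (m * (p / m)) * Real.cos t))
        - ∫ t in (0 : ℝ)..Real.pi, φ (a p + 2 * b p * Real.cos t)|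
        ≤ Real.pi * (K * (|a p - a (m * (p / m))| + 2 * |b p - b (m * (p / m))|)) := by
      intro p _
      rw [← intervalIntegral.integral_sub]
      · have := intervalIntegral.norm_integral_le_of_norm_le_const (a := 0) (b := Real.pi)
          (f := fun t => φ (a (m * (p / m)) + 2 * b (m * (p / m)) * Real.cos t)
            - φ (a p + 2 * b p * Real.cos t))
          (C := K * (|a p - a (m * (p / m))| + 2 * |b p - b (m * (p / m))|)) (by
            intro t _
            have h := hφ.dist_le_mul (a (m * (p / m)) + 2 * b (m * (p / m)) * Real.cos t)
              (a p + 2 * b p * Real.cos t)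
            rw [dist_eq_norm, dist_comm, Real.dist_eq] at h
            refine h.trans (mul_le_mul_of_nonneg_left ?_ K.2)
            have e : a p + 2 * b p * Real.cos t
              - (a (m * (p / m)) + 2 * b (m * (p / m)) * Real.cos t)
              = (a p - a (m * (p / m))) + 2 * (b p - b (m * (p / m))) * Real.cos t := by ring
            rw [e]
            refine (abs_add_le _ _).trans (add_le_add le_rfl ?_)
            rw [abs_mul, abs_mul, abs_two]
            exact mul_le_of_le_one_right (by positivity) (Real.abs_cos_le_one t))
        rw [sub_zero, abs_of_pos Real.pi_pos, Real.norm_eq_abs] at this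
        rw [mul_comm Real.pi]
        exact this
      · apply Continuous.intervalIntegrable
        fun_prop
      · apply Continuous.intervalIntegrable
        fun_prop
    refine (Finset.abs_sum_le_sum_abs _ _).trans ((Finset.sum_le_sum this).trans ?_)
    rw [← Finset.mul_sum, ← Finset.mul_sum, Finset.sum_add_distrib, ← Finset.mul_sum]
    refine mul_le_mul_of_nonneg_left (mul_le_mul_of_nonneg_left ?_ K.2) Real.pi_pos.le
    have h1 := (dev_sum k m hm a).trans hDa
    have h2 := (dev_sum k m hm b).trans hDb
    linarith
  have := abs_sub_le (Real.pi * jacobiTrace k a b φ)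
    (∑ p ∈ Finset.range k, (∫ t in (0 : ℝ)..Real.pi,
        φ (a (m * (p / m)) + 2 * b (m * (p / m)) * Real.cos t)))
    (∑ p ∈ Finset.range k, ∫ t in (0 : ℝ)..Real.pi, φ (a p + 2 * b p * Real.cos t))
  exact this.trans (add_le_add hmain hcomp)

/-! ## Asymptotics -/

theorem final_error (C c K y : ℝ) (hC : 0 ≤ C) (hc : 0 ≤ c) (hK : 0 ≤ K) (hy : 1 ≤ y) (q : ℝ)
    (hq : q ≤ y ^ 12) :
    Real.pi * (K * √(6 * (6 * (C * y) * (2 * c * y ^ 12) + 4 * (C * y) ^ 2 * (q + 1)) * y ^ 16))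
        + Real.pi * (K * (3 * (2 * c * y ^ 12)))
      ≤ Real.pi * (K * √(72 * C * c + 48 * C ^ 2) + 6 * K * c) * y ^ 15 := by
  have hy0 : 0 < y := by linarith
  have h1 : 6 * (6 * (C * y) * (2 * c * y ^ 12) + 4 * (C * y) ^ 2 * (q + 1)) * y ^ 16
      ≤ (72 * C * c + 48 * C ^ 2) * (y ^ 15) ^ 2 := by
    have p1 : y ^ 29 ≤ y ^ 30 := pow_le_pow_right₀ hy (by norm_num)
    have p2 : (1 : ℝ) ≤ y ^ 12 := one_le_pow₀ hy
    have e1 : C * c * y ^ 29 ≤ C * c * y ^ 30 := mul_le_mul_of_nonneg_left p1 (by positivity)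
    have e2 : C ^ 2 * y ^ 18 * (q + 1) ≤ C ^ 2 * y ^ 18 * (2 * y ^ 12) :=
      mul_le_mul_of_nonneg_left (by linarith) (by positivity)
    nlinarith [e1, e2]
  have h2 : √(6 * (6 * (C * y) * (2 * c * y ^ 12) + 4 * (C * y) ^ 2 * (q + 1)) * y ^ 16)
      ≤ √(72 * C * c + 48 * C ^ 2) * y ^ 15 := by
    refine (Real.sqrt_le_sqrt h1).trans ?_
    rw [Real.sqrt_mul (by positivity), Real.sqrt_sq (by positivity)]
  have h3 : y ^ 12 ≤ y ^ 15 := pow_le_pow_right₀ hy (by norm_num)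
  have h4 := mul_le_mul_of_nonneg_left h2 hK
  have h5 := mul_le_mul_of_nonneg_left h3 (by positivity : 0 ≤ 6 * K * c)
  have := Real.pi_pos
  rw [← mul_add, mul_assoc Real.pi _ (y ^ 15)]
  refine mul_le_mul_of_nonneg_left ?_ this.le
  linarith

theorem memS'_bounds (a : ℕ → ℕ → ℝ) (ha : MemS' a) : ∃ C c : ℝ, 0 ≤ C ∧ 0 ≤ c ∧
    ∀ᶠ k : ℕ in atTop, (∀ i < k, |a k i| ≤ C * (k : ℝ) ^ (1 / 16 : ℝ)) ∧
      ∑ i ∈ Finset.range (k - 1), |a k (i + 1) - a k i| ≤ c * ((k : ℝ) ^ (1 / 16 : ℝ)) ^ 8 := by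
  obtain ⟨h1, C, h2⟩ := ha
  have h3 := h1 (1 / 2) ⟨by norm_num, by norm_num⟩
  obtain ⟨c, hc0, hc⟩ := h3.exists_nonneg
  have hlog : ∀ᶠ k : ℕ in atTop, ‖Real.log k‖ ≤ 1 * ‖(k : ℝ) ^ (1 / 16 : ℝ)‖ :=
    tendsto_natCast_atTop_atTop.eventually
      ((isLittleO_log_rpow_atTop (by norm_num : (0 : ℝ) < 1 / 16)).def (c := 1) (by norm_num))
  refine ⟨|C|, c, abs_nonneg _, hc0, ?_⟩
  filter_upwards [h2, hc.bound, hlog] with k e1 e2 e3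
  constructor
  · intro i hi
    refine (e1 i hi).trans ?_
    refine (le_abs_self _).trans ?_
    rw [abs_mul]
    refine mul_le_mul_of_nonneg_left ?_ (abs_nonneg _)
    rw [one_mul, Real.norm_eq_abs, Real.norm_eq_abs,
      abs_of_nonneg (Real.rpow_nonneg (Nat.cast_nonneg k) _)] at e3
    exact e3
  · rw [Real.norm_eq_abs, Real.norm_eq_abs,
      abs_of_nonneg (Real.rpow_nonneg (Nat.cast_nonneg k) _)] at e2
    refine (le_abs_self _).trans (e2.trans (le_of_eq ?_))
    rw [← Real.rpow_natCast, ← Real.rpow_mul (Nat.cast_nonneg k)]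
    norm_num

theorem trace_asymp (a b : ℕ → ℕ → ℝ) (ha : MemS' a) (hb : MemS' b) (φ : ℝ → ℝ)
    (K : NNReal) (hφ : LipschitzWith K φ) :
    Tendsto (fun k : ℕ => (1 / (k : ℝ)) * jacobiTrace k (a k) (b k) φ
      - (1 / (k : ℝ)) * ∑ p ∈ Finset.range k, (1 / Real.pi) *
        ∫ t in (0 : ℝ)..Real.pi, φ (a k p + 2 * b k p * Real.cos t)) atTop (nhds 0) := by
  obtain ⟨C₁, c₁, hC₁, hc₁, h₁⟩ := memS'_bounds a ha
  obtain ⟨C₂, c₂, hC₂, hc₂, h₂⟩ := memS'_bounds b hb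
  set C := max C₁ C₂
  set c := max c₁ c₂
  have hC : 0 ≤ C := hC₁.trans (le_max_left _ _)
  have hc : 0 ≤ c := hc₁.trans (le_max_left _ _)
  set M := (K * √(72 * C * c + 48 * C ^ 2) + 6 * K * c : ℝ) with hM
  have hlim : Tendsto (fun k : ℕ => M * ((k : ℝ) ^ (1 / 16 : ℝ))⁻¹) atTop (nhds 0) := by
    have := (tendsto_inv_atTop_zero.comp ((tendsto_rpow_atTop
      (by norm_num : (0 : ℝ) < 1 / 16)).comp tendsto_natCast_atTop_atTop)).const_mul M
    rw [mul_zero] at this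
    exact this
  refine squeeze_zero_norm' ?_ hlim
  filter_upwards [h₁, h₂, eventually_ge_atTop 1] with k ⟨e1, e2⟩ ⟨e3, e4⟩ hk
  set y := (k : ℝ) ^ (1 / 16 : ℝ) with hy
  have hk1 : (1 : ℝ) ≤ k := by exact_mod_cast hk
  have hy1 : 1 ≤ y := Real.one_le_rpow hk1 (by norm_num)
  have hy0 : 0 < y := by linarith
  have hky : (k : ℝ) = y ^ 16 := by
    rw [hy, ← Real.rpow_natCast, ← Real.rpow_mul (Nat.cast_nonneg k)]
    norm_num
  set m := ⌈y ^ 4⌉₊ with hm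
  have hm0 : 0 < m := Nat.ceil_pos.mpr (by positivity)
  have hm1 : y ^ 4 ≤ m := Nat.le_ceil _
  have hm2 : (m : ℝ) ≤ 2 * y ^ 4 := by
    have := Nat.ceil_lt_add_one (by positivity : 0 ≤ y ^ 4)
    have h2 : (1 : ℝ) ≤ y ^ 4 := one_le_pow₀ hy1
    linarith
  have hq : ((k / m : ℕ) : ℝ) ≤ y ^ 12 := by
    refine Nat.cast_div_le.trans ?_
    rw [div_le_iff₀ (by exact_mod_cast hm0), hky]
    nlinarith [mul_le_mul_of_nonneg_left hm1 (by positivity : 0 ≤ y ^ 12)]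
  have hD : ∀ V c' : ℝ, 0 ≤ V → c' ≤ c → V ≤ c' * y ^ 8 → m * V ≤ 2 * c * y ^ 12 := by
    intro V c' hV hc' h
    have : V ≤ c * y ^ 8 := h.trans (mul_le_mul_of_nonneg_right hc' (by positivity))
    calc m * V ≤ (2 * y ^ 4) * (c * y ^ 8) := mul_le_mul hm2 this hV (by positivity)
      _ = _ := by ring
  have hmain := trace_compare_final k m hm0 (a k) (b k) φ K hφ (C * y)
    (fun i hi => (e1 i hi).trans (mul_le_mul_of_nonneg_right (le_max_left _ _) hy0.le))
    (fun i hi => (e3 i hi).trans (mul_le_mul_of_nonneg_right (le_max_right _ _) hy0.le))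
    (2 * c * y ^ 12)
    (hD _ c₁ (Finset.sum_nonneg fun _ _ => abs_nonneg _) (le_max_left _ _) e2)
    (hD _ c₂ (Finset.sum_nonneg fun _ _ => abs_nonneg _) (le_max_right _ _) e4)
  rw [hky] at hmain
  have hfin := hmain.trans (final_error C c K y hC hc K.2 hy1 _ hq)
  rw [← hM] at hfin
  have hpi := Real.pi_pos
  rw [← Finset.mul_sum, Real.norm_eq_abs, hky]
  have e : 1 / y ^ 16 * jacobiTrace k (a k) (b k) φ - 1 / y ^ 16 * (1 / Real.pi *
      ∑ p ∈ Finset.range k, ∫ t in (0 : ℝ)..Real.pi, φ (a k p + 2 * b k p * Real.cos t))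
      = (Real.pi * jacobiTrace k (a k) (b k) φ -
      ∑ p ∈ Finset.range k, ∫ t in (0 : ℝ)..Real.pi, φ (a k p + 2 * b k p * Real.cos t))
        / (Real.pi * y ^ 16) := by
    field_simp
  rw [e, abs_div, abs_of_pos (by positivity : 0 < Real.pi * y ^ 16), div_le_iff₀ (by positivity)]
  refine hfin.trans (le_of_eq ?_)
  field_simp

/-! ## Measures -/

theorem exists_empirical {Ω : Type*} [MeasurableSpace Ω] [MeasurableSingletonClass Ω]
    (k : ℕ) (hk : 0 < k) (x : Fin k → Ω) :
    ∃ ν : ProbabilityMeasure Ω,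
      (∀ f : Ω → ℝ, ∫ w, f w ∂(ν : Measure Ω) = (1 / (k : ℝ)) * ∑ i, f (x i)) ∧
      (∀ S : Set Ω, MeasurableSet S → (ν : Measure Ω) S
        = (k : ENNReal)⁻¹ * ∑ i, S.indicator 1 (x i)) := by
  have hk0 : (k : ENNReal) ≠ 0 := by exact_mod_cast hk.ne'
  refine ⟨⟨(k : ENNReal)⁻¹ • ∑ i, Measure.dirac (x i), ⟨?_⟩⟩, ?_, ?_⟩
  · simp [ENNReal.inv_mul_cancel hk0 (ENNReal.natCast_ne_top k)]
  · intro f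
    simp only [ProbabilityMeasure.coe_mk]
    rw [integral_smul_measure, integral_finsetSum_measure]
    · simp
    · intro i _
      exact integrable_dirac (by simp)
  · intro S hS
    simp [Measure.dirac_apply' _ hS]

theorem exists_limit_measure (μ : ProbabilityMeasure (ℝ × ℝ)) :
    ∃ τ : ProbabilityMeasure ℝ, ∀ φ : ℝ → ℝ, Continuous φ → (∃ C : ℝ, ∀ x, |φ x| ≤ C) →
      ∫ x, φ x ∂(τ : Measure ℝ) = (1 / Real.pi) *
        ∫ p, (∫ t in (0 : ℝ)..Real.pi, φ (p.1 + 2 * p.2 * Real.cos t)) ∂(μ : Measure (ℝ × ℝ)) := by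
  set u : Measure ℝ := (ENNReal.ofReal Real.pi)⁻¹ • volume.restrict (Set.Ioc 0 Real.pi) with hu
  have hpi := Real.pi_pos
  have : IsProbabilityMeasure u := ⟨by
    simp [hu, ENNReal.inv_mul_cancel (ENNReal.ofReal_pos.mpr hpi).ne' ENNReal.ofReal_ne_top]⟩
  set F : (ℝ × ℝ) × ℝ → ℝ := fun z => z.1.1 + 2 * z.1.2 * Real.cos z.2 with hF
  have hFc : Continuous F := by fun_prop
  refine ⟨⟨((μ : Measure (ℝ × ℝ)).prod u).map F,
    Measure.isProbabilityMeasure_map hFc.aemeasurable⟩, ?_⟩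
  rintro φ hφ ⟨C, hC⟩
  simp only [ProbabilityMeasure.coe_mk]
  rw [integral_map hFc.aemeasurable hφ.aestronglyMeasurable, integral_prod]
  · rw [← integral_const_mul]
    congr 1
    ext p
    rw [hu, integral_smul_measure, intervalIntegral.integral_of_le hpi.le, ENNReal.toReal_inv,
      ENNReal.toReal_ofReal hpi.le, smul_eq_mul, one_div]
  · exact Integrable.of_bound (hφ.comp hFc).aestronglyMeasurable C
      (Eventually.of_forall fun z => hC _)

theorem exists_subseq_empirical (a b : ℕ → ℕ → ℝ)
    (htight : ∀ ε : ℝ, 0 < ε → ∃ M : ℝ, 0 < M ∧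
      ∀ᶠ k : ℕ in Filter.atTop,
        (((Finset.range k).filter fun j => M < |a k j|).card : ℝ) / k < ε ∧
        (((Finset.range k).filter fun j => M < |b k j|).card : ℝ) / k < ε) :
    ∃ g : ℕ → ℕ, StrictMono g ∧ (∀ j, 0 < g j) ∧ ∃ μ : ProbabilityMeasure (ℝ × ℝ),
      ∀ ψ : ℝ × ℝ → ℝ, Continuous ψ → (∃ C : ℝ, ∀ p, |ψ p| ≤ C) →
        Tendsto (fun j => (1 / (g j : ℝ)) *
          ∑ p ∈ Finset.range (g j), ψ (a (g j) p, b (g j) p)) atTop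
          (nhds (∫ p, ψ p ∂(μ : Measure (ℝ × ℝ)))) := by
  choose ν hν1 hν2 using fun n : ℕ => exists_empirical (n + 1) n.succ_pos
    (fun i : Fin (n + 1) => (a (n + 1) i, b (n + 1) i))
  have htight' : IsTightMeasureSet
      {((μ : ProbabilityMeasure (ℝ × ℝ)) : Measure (ℝ × ℝ)) | μ ∈ Set.range ν} := by
    rw [isTightMeasureSet_iff_exists_isCompact_measure_compl_le]
    intro ε hε
    obtain ⟨e, he0, heε⟩ := ENNReal.lt_iff_exists_nnreal_btwn.mp hε
    have he0' : (0 : ℝ) < e := by exact_mod_cast he0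
    obtain ⟨M, hM, hev⟩ := htight (e / 2) (by positivity)
    obtain ⟨N, hN⟩ := eventually_atTop.mp hev
    set F : Set (ℝ × ℝ) := (fun z : ℕ × ℕ => (a z.1 z.2, b z.1 z.2)) '' (Set.Iio N ×ˢ Set.Iio N)
      with hF
    have hFfin : F.Finite := ((Set.finite_Iio N).prod (Set.finite_Iio N)).image _
    set B : Set (ℝ × ℝ) := Set.Icc (-M) M ×ˢ Set.Icc (-M) M with hB
    have hcomp : IsCompact (B ∪ F) := (isCompact_Icc.prod isCompact_Icc).union hFfin.isCompact
    refine ⟨B ∪ F, hcomp, ?_⟩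
    rintro _ ⟨_, ⟨n, rfl⟩, rfl⟩
    rw [hν2 n _ hcomp.measurableSet.compl]
    by_cases hn : n + 1 < N
    · have : ∀ i : Fin (n + 1), (B ∪ F)ᶜ.indicator (1 : ℝ × ℝ → ENNReal)
          (a (n + 1) i, b (n + 1) i) = 0 := by
        intro i
        refine Set.indicator_of_notMem ?_ _
        intro h
        refine h (Or.inr ⟨(n + 1, (i : ℕ)), ⟨hn, ?_⟩, rfl⟩)
        have := i.2
        simp only [Set.mem_Iio]
        omega
      rw [Finset.sum_congr rfl fun i _ => this i]
      simp
    · obtain ⟨h1, h2⟩ := hN (n + 1) (by omega)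
      have hind : ∀ i : Fin (n + 1), (B ∪ F)ᶜ.indicator (1 : ℝ × ℝ → ENNReal)
          (a (n + 1) i, b (n + 1) i) ≤ (fun j : ℕ => (if M < |a (n + 1) j| then (1 : ENNReal) else 0)
            + (if M < |b (n + 1) j| then (1 : ENNReal) else 0)) i := by
        intro i
        by_cases hmem : (a (n + 1) i, b (n + 1) i) ∈ (B ∪ F)ᶜ
        · rw [Set.indicator_of_mem hmem]
          by_cases ha : M < |a (n + 1) i|
          · simp [ha]
          · by_cases hb : M < |b (n + 1) i|
            · simp [hb]
            · exfalso
              exact hmem (Or.inl ⟨abs_le.mp (not_lt.mp ha), abs_le.mp (not_lt.mp hb)⟩)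
        · rw [Set.indicator_of_notMem hmem]
          exact zero_le
      refine le_trans (mul_le_mul_right (Finset.sum_le_sum fun i _ => hind i) _) ?_
      rw [Fin.sum_univ_eq_sum_range (fun j : ℕ => (if M < |a (n + 1) j| then (1 : ENNReal) else 0)
            + (if M < |b (n + 1) j| then (1 : ENNReal) else 0)), Finset.sum_add_distrib,
            Finset.sum_boole, Finset.sum_boole]
      set ca := ((Finset.range (n + 1)).filter fun j => M < |a (n + 1) j|).card
      set cb := ((Finset.range (n + 1)).filter fun j => M < |b (n + 1) j|).card
      have hreal : (((ca + cb : ℕ) : ℝ)) / ((n + 1 : ℕ) : ℝ) ≤ e := by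
        push_cast at h1 h2 ⊢
        rw [add_div]
        linarith
      have := ENNReal.ofReal_le_ofReal hreal
      rw [ENNReal.ofReal_div_of_pos (by positivity), ENNReal.ofReal_natCast,
        ENNReal.ofReal_natCast, ENNReal.ofReal_coe_nnreal, ENNReal.div_eq_inv_mul,
        Nat.cast_add ca cb] at this
      exact this.trans heε.le
  have hcpt := isCompact_closure_of_isTightMeasureSet htight'
  obtain ⟨μ, -, s, hs, hlim⟩ := hcpt.tendsto_subseq (x := ν)
    (fun n => subset_closure (Set.mem_range_self n))
  refine ⟨fun j => s j + 1, fun i j hij => Nat.succ_lt_succ (hs hij), fun j => Nat.succ_pos _,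
    μ, ?_⟩
  rintro ψ hψ ⟨C, hC⟩
  have h := (ProbabilityMeasure.tendsto_iff_forall_integral_tendsto.mp hlim)
    (BoundedContinuousFunction.ofNormedAddCommGroup ψ hψ C hC)
  simp only [BoundedContinuousFunction.coe_ofNormedAddCommGroup, Function.comp_apply, hν1] at h
  refine h.congr fun j => ?_
  rw [Fin.sum_univ_eq_sum_range (fun p : ℕ => ψ (a (s j + 1) p, b (s j + 1) p)) (s j + 1)]

/-- for `(a^k)ₖ, (b^k)ₖ ∈ 𝒮′` satisfying the uniform tightness condition, there
is a subsequence and a probability measure `μ` on `ℝ²` along which the trace formula holds for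
every bounded continuous `φ`. -/
theorem exists_subsequence_trace_formula_unbounded (a b : ℕ → ℕ → ℝ)
    (ha : MemS' a) (hb : MemS' b)
    (htight : ∀ ε : ℝ, 0 < ε → ∃ M : ℝ, 0 < M ∧
      ∀ᶠ k : ℕ in Filter.atTop,
        (((Finset.range k).filter fun j => M < |a k j|).card : ℝ) / k < ε ∧
        (((Finset.range k).filter fun j => M < |b k j|).card : ℝ) / k < ε) :
    ∃ g : ℕ → ℕ, StrictMono g ∧ (∀ j, 0 < g j) ∧
      ∃ μ : Measure (ℝ × ℝ), IsProbabilityMeasure μ ∧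
        ∀ φ : ℝ → ℝ, Continuous φ → (∃ C : ℝ, ∀ x, |φ x| ≤ C) →
          Filter.Tendsto
            (fun j : ℕ => (1 / (g j : ℝ)) * jacobiTrace (g j) (a (g j)) (b (g j)) φ)
            Filter.atTop
            (nhds ((1 / Real.pi) *
              ∫ p, (∫ t in (0 : ℝ)..Real.pi, φ (p.1 + 2 * p.2 * Real.cos t)) ∂μ)) := by

  obtain ⟨g, hg, hgpos, μ, hμ⟩ := exists_subseq_empirical a b htight
  refine ⟨g, hg, hgpos, μ, inferInstance, ?_⟩
  obtain ⟨τ, hτ⟩ := exists_limit_measure μ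
  choose σ hσ1 hσ2 using fun j : ℕ => exists_empirical (g j) (hgpos j)
    (fun i => (jacobiMatrix_isHermitian (g j) (a (g j)) (b (g j))).eigenvalues i)
  have hlim : Tendsto σ atTop (nhds τ) := by
    rw [tendsto_iff_forall_lipschitz_integral_tendsto]
    rintro φ ⟨C, hC⟩ ⟨K, hK⟩
    have hφc := hK.continuous
    have hbd : ∀ x, |φ x| ≤ C + |φ 0| := by
      intro x
      have h1 := hC x 0
      rw [Real.dist_eq] at h1
      have h2 := abs_sub_abs_le_abs_sub (φ x) (φ 0)
      linarith
    rw [hτ φ hφc ⟨_, hbd⟩, ← integral_const_mul]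
    have hψ := hμ (fun p => 1 / Real.pi *
        ∫ t in (0 : ℝ)..Real.pi, φ (p.1 + 2 * p.2 * Real.cos t)) (by
          refine continuous_const.mul ?_
          exact intervalIntegral.continuous_parametric_intervalIntegral_of_continuous'
            (by fun_prop) _ _)
        ⟨C + |φ 0|, by
          intro p
          have h := intervalIntegral.norm_integral_le_of_norm_le_const (a := 0) (b := Real.pi)
            (f := fun t => φ (p.1 + 2 * p.2 * Real.cos t)) (C := C + |φ 0|)
            (fun t _ => hbd _)
          rw [sub_zero, abs_of_pos Real.pi_pos, Real.norm_eq_abs] at h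
          rw [abs_mul, abs_of_pos (by positivity : 0 < 1 / Real.pi), one_div_mul_eq_div,
            div_le_iff₀ Real.pi_pos]
          exact h⟩
    have hsum := ((trace_asymp a b ha hb φ K hK).comp hg.tendsto_atTop).add hψ
    rw [zero_add] at hsum
    refine hsum.congr fun j => ?_
    simp only [Function.comp_apply, hσ1, jacobiTrace]
    ring
  rintro φ hφ ⟨C, hC⟩
  have h := (ProbabilityMeasure.tendsto_iff_forall_integral_tendsto.mp hlim)
    (BoundedContinuousFunction.ofNormedAddCommGroup φ hφ C hC)
  simp only [BoundedContinuousFunction.coe_ofNormedAddCommGroup, hσ1] at h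
  rw [hτ φ hφ ⟨C, hC⟩] at h
  exact h
end
end
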